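/- arXiv:1610.02446 — 6 statements merged into one kernel-verified Lean document; each statement's English description precedes it below -/
import Mathlib

section
/- For every graphon W, the inequality 9·d₃(W) + d₂(W) − (5/3)·d₁(W) + d₀(W) ≥ 0 holds. -/
/-!
The inequality is an exact one-vertex flag square: since
`(9, 1, -5/3, 1) = (a², (a² + 2ab)/3, (b² + 2ab)/3, b²)` for `a = 3`, `b = -1`, the left-hand side
equals `∫∫∫ (4 W(x,y) - 1) (4 W(x,z) - 1) = ∫ (∫ (4 W(x,y) - 1) dy)² dx ≥ 0`, where `4 W - 1` is
`3 W - (1 - W)`.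

To prove the identity, all densities are written as integrals over the cube. In the expansion of
the left-hand side into monomials in `W(x,y)`, `W(y,z)`, `W(x,z)` the triangle term cancels, and
the remaining linear (resp. quadratic) monomials have equal integrals, because the cube measure is
invariant under permuting coordinates (`integral_swap_yz`, `integral_swap_xy`).
-/

open MeasureTheory Real

/-- A graphon: a symmetric measurable function `W : ℝ → ℝ → ℝ` taking values in `[0,1]`
(only its values on `[0,1]²` matter). -/
structure Graphon where
  W : ℝ → ℝ → ℝ
  measurable : Measurable (Function.uncurry W)
  mem_Icc : ∀ x y, W x y ∈ Set.Icc (0 : ℝ) 1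
  symm : ∀ x y, W x y = W y x

/-- Density of the empty 3-vertex graph (co-triangle). -/
noncomputable def d0 (G : Graphon) : ℝ :=
  ∫ x in Set.Icc (0 : ℝ) 1, ∫ y in Set.Icc (0 : ℝ) 1, ∫ z in Set.Icc (0 : ℝ) 1,
    (1 - G.W x y) * (1 - G.W y z) * (1 - G.W x z)

/-- Density of the one-edge 3-vertex graph (co-cherry). -/
noncomputable def d1 (G : Graphon) : ℝ :=
  3 * ∫ x in Set.Icc (0 : ℝ) 1, ∫ y in Set.Icc (0 : ℝ) 1, ∫ z in Set.Icc (0 : ℝ) 1,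
    G.W x y * (1 - G.W y z) * (1 - G.W x z)

/-- Density of the two-edge 3-vertex graph (cherry). -/
noncomputable def d2 (G : Graphon) : ℝ :=
  3 * ∫ x in Set.Icc (0 : ℝ) 1, ∫ y in Set.Icc (0 : ℝ) 1, ∫ z in Set.Icc (0 : ℝ) 1,
    G.W x y * G.W x z * (1 - G.W y z)

/-- Triangle density. -/
noncomputable def d3 (G : Graphon) : ℝ :=
  ∫ x in Set.Icc (0 : ℝ) 1, ∫ y in Set.Icc (0 : ℝ) 1, ∫ z in Set.Icc (0 : ℝ) 1,
    G.W x y * G.W y z * G.W x z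

/-- Edge density. -/
noncomputable def dE (G : Graphon) : ℝ :=
  ∫ x in Set.Icc (0 : ℝ) 1, ∫ y in Set.Icc (0 : ℝ) 1, G.W x y

/-- Degree of a vertex `x` in a graphon. -/
noncomputable def deg (G : Graphon) (x : ℝ) : ℝ :=
  ∫ y in Set.Icc (0 : ℝ) 1, G.W x y

noncomputable def hA1 (σ : ℝ) : ℝ :=
  (9 - 48 * σ + 114 * σ ^ 2 - 120 * σ ^ 3
      + 3 * (1 - 2 * σ) * (4 * σ - 1) ^ 2 * Real.sqrt (5 - 12 * σ)) / (10 - 24 * σ)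

noncomputable def hA3 (σ : ℝ) : ℝ :=
  (2 - 18 * σ + 57 * σ ^ 2 - 60 * σ ^ 3) / (5 - 12 * σ)

def hB1 (σ : ℝ) : ℝ := 6 * σ - 18 * σ ^ 2 + 18 * σ ^ 3

def hB3 (σ : ℝ) : ℝ := 1 - 6 * σ + 12 * σ ^ 2 - 6 * σ ^ 3

/-- The objective function of the optimization problem from Proposition 10. -/
def F (α x1 x2 x3 y1 y2 y3 : ℝ) : ℝ :=
  (x1 ^ 3 * (3 - α - 3 * (3 - α) * y1 - 3 * (α - 1) * y1 ^ 2) + 3 * x1 ^ 2 * y1) +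
  (x2 ^ 3 * (3 - α - 3 * (3 - α) * y2 - 3 * (α - 1) * y2 ^ 2) + 3 * x2 ^ 2 * y2) +
  (x3 ^ 3 * (3 - α - 3 * (3 - α) * y3 - 3 * (α - 1) * y3 ^ 2) + 3 * x3 ^ 2 * y3)

/-- Lebesgue measure on `[0,1]`. -/
noncomputable abbrev unitMeasure : Measure ℝ := volume.restrict (Set.Icc (0 : ℝ) 1)

/-- Lebesgue measure on `[0,1]³`, with points written as `(x, (y, z))`. -/
noncomputable abbrev cubeMeasure : Measure (ℝ × ℝ × ℝ) :=
  unitMeasure.prod (unitMeasure.prod unitMeasure)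

theorem integral_cube {f : ℝ × ℝ × ℝ → ℝ} (hf : Measurable f) (C : ℝ) (hC : ∀ p, |f p| ≤ C) :
    ∫ x in Set.Icc (0 : ℝ) 1, ∫ y in Set.Icc (0 : ℝ) 1, ∫ z in Set.Icc (0 : ℝ) 1, f (x, y, z)
      = ∫ p, f p ∂cubeMeasure := by
  have h : Integrable f cubeMeasure :=
    Integrable.of_bound hf.aestronglyMeasurable C (Filter.Eventually.of_forall hC)
  rw [integral_prod f h]
  congr 1
  ext x
  have hx : Integrable (fun q : ℝ × ℝ => f (x, q)) (unitMeasure.prod unitMeasure) :=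
    Integrable.of_bound (hf.comp measurable_prodMk_left).aestronglyMeasurable C
      (Filter.Eventually.of_forall fun q => hC (x, q))
  rw [integral_prod _ hx]

theorem integral_swap_yz {f : ℝ × ℝ × ℝ → ℝ} (hf : Measurable f) :
    ∫ p, f (p.1, p.2.2, p.2.1) ∂cubeMeasure = ∫ p, f p ∂cubeMeasure := by
  have h : MeasurePreserving (fun p : ℝ × ℝ × ℝ => (p.1, p.2.2, p.2.1)) cubeMeasure cubeMeasure :=
    (MeasurePreserving.id unitMeasure).prod
      (Measure.measurePreserving_swap (μ := unitMeasure) (ν := unitMeasure))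
  conv_rhs => rw [← h.map_eq]
  rw [integral_map h.measurable.aemeasurable hf.aestronglyMeasurable]

theorem integral_swap_xy {f : ℝ × ℝ × ℝ → ℝ} (hf : Measurable f) :
    ∫ p, f (p.2.1, p.1, p.2.2) ∂cubeMeasure = ∫ p, f p ∂cubeMeasure := by
  have h : MeasurePreserving (fun p : ℝ × ℝ × ℝ => (p.2.1, p.1, p.2.2)) cubeMeasure cubeMeasure :=
    (measurePreserving_prodAssoc unitMeasure unitMeasure unitMeasure).comp
      (((Measure.measurePreserving_swap (μ := unitMeasure) (ν := unitMeasure)).prod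
        (MeasurePreserving.id unitMeasure)).comp
        ((measurePreserving_prodAssoc unitMeasure unitMeasure unitMeasure).symm _))
  conv_rhs => rw [← h.map_eq]
  rw [integral_map h.measurable.aemeasurable hf.aestronglyMeasurable]

/-- The flag square: its inner two integrals factor as the square of `∫ (4 W(x,y) - 1) dy`. -/
theorem flag_square_nonneg (G : Graphon) :
    0 ≤ ∫ x in Set.Icc (0 : ℝ) 1, ∫ y in Set.Icc (0 : ℝ) 1, ∫ z in Set.Icc (0 : ℝ) 1,
      (4 * G.W x y - 1) * (4 * G.W x z - 1) := by
  refine integral_nonneg fun x => ?_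
  simp only [integral_const_mul, integral_mul_const]
  exact mul_self_nonneg _

theorem flag_square_inequality (G : Graphon) :
    9 * d3 G + d2 G - (5 / 3) * d1 G + d0 G ≥ 0 := by
  -- `a`, `b`, `c` are the edge weights `W(x,y)`, `W(y,z)`, `W(x,z)` as functions on the cube.
  let a : ℝ × ℝ × ℝ → ℝ := fun p => G.W p.1 p.2.1
  let b : ℝ × ℝ × ℝ → ℝ := fun p => G.W p.2.1 p.2.2
  let c : ℝ × ℝ × ℝ → ℝ := fun p => G.W p.1 p.2.2
  have ma : Measurable a :=
    G.measurable.comp (measurable_fst.prodMk (measurable_fst.comp measurable_snd))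
  have mb : Measurable b := G.measurable.comp measurable_snd
  have mc : Measurable c :=
    G.measurable.comp (measurable_fst.prodMk (measurable_snd.comp measurable_snd))
  have ia : ∀ p, |a p| ≤ 1 := fun p =>
    abs_le.2 ⟨by linarith [(G.mem_Icc p.1 p.2.1).1], (G.mem_Icc p.1 p.2.1).2⟩
  have ib : ∀ p, |b p| ≤ 1 := fun p =>
    abs_le.2 ⟨by linarith [(G.mem_Icc p.2.1 p.2.2).1], (G.mem_Icc p.2.1 p.2.2).2⟩
  have ic : ∀ p, |c p| ≤ 1 := fun p =>
    abs_le.2 ⟨by linarith [(G.mem_Icc p.1 p.2.2).1], (G.mem_Icc p.1 p.2.2).2⟩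
  have mul_bd : ∀ {u v A B : ℝ}, |u| ≤ A → |v| ≤ B → |u * v| ≤ A * B := fun {u v A B} hu hv => by
    rw [abs_mul]
    exact mul_le_mul hu hv (abs_nonneg _) ((abs_nonneg _).trans hu)
  have sub_bd : ∀ {u : ℝ}, |u| ≤ 1 → |1 - u| ≤ 2 := fun {u} hu => by
    rw [abs_le] at hu ⊢
    constructor <;> linarith
  have quad_bd : ∀ {u : ℝ}, |u| ≤ 1 → |4 * u - 1| ≤ 5 := fun {u} hu => by
    rw [abs_le] at hu ⊢
    constructor <;> linarith
  have e0 : d0 G = ∫ p, (1 - a p) * (1 - b p) * (1 - c p) ∂cubeMeasure :=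
    integral_cube (f := fun p => (1 - a p) * (1 - b p) * (1 - c p)) (by fun_prop) _
      fun p => mul_bd (mul_bd (sub_bd (ia p)) (sub_bd (ib p))) (sub_bd (ic p))
  have e1 : d1 G = 3 * ∫ p, a p * (1 - b p) * (1 - c p) ∂cubeMeasure :=
    congrArg (3 * ·) <| integral_cube (f := fun p => a p * (1 - b p) * (1 - c p)) (by fun_prop) _
      fun p => mul_bd (mul_bd (ia p) (sub_bd (ib p))) (sub_bd (ic p))
  have e2 : d2 G = 3 * ∫ p, a p * c p * (1 - b p) ∂cubeMeasure :=
    congrArg (3 * ·) <| integral_cube (f := fun p => a p * c p * (1 - b p)) (by fun_prop) _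
      fun p => mul_bd (mul_bd (ia p) (ic p)) (sub_bd (ib p))
  have e3 : d3 G = ∫ p, a p * b p * c p ∂cubeMeasure :=
    integral_cube (f := fun p => a p * b p * c p) (by fun_prop) _
      fun p => mul_bd (mul_bd (ia p) (ib p)) (ic p)
  have eq : 0 ≤ ∫ p, (4 * a p - 1) * (4 * c p - 1) ∂cubeMeasure := by
    rw [← integral_cube (f := fun p => (4 * a p - 1) * (4 * c p - 1)) (by fun_prop) _
      fun p => mul_bd (quad_bd (ia p)) (quad_bd (ic p))]
    exact flag_square_nonneg G
  -- Symmetrization of the linear and quadratic monomials.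
  have sbc : ∫ p, b p ∂cubeMeasure = ∫ p, c p ∂cubeMeasure := integral_swap_xy mc
  have sca : ∫ p, c p ∂cubeMeasure = ∫ p, a p ∂cubeMeasure := integral_swap_yz ma
  have sab : ∫ p, a p * b p ∂cubeMeasure = ∫ p, a p * c p ∂cubeMeasure := by
    rw [← integral_swap_xy (f := fun p => a p * c p) (by fun_prop)]
    simp only [a, b, c, G.symm]
  have sbb : ∫ p, b p * c p ∂cubeMeasure = ∫ p, a p * b p ∂cubeMeasure := by
    rw [← integral_swap_yz (f := fun p => a p * b p) (by fun_prop)]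
    refine integral_congr_ae (Filter.Eventually.of_forall fun p => ?_)
    simp only [a, b, c]
    rw [G.symm p.2.2 p.2.1, mul_comm]
  have int : ∀ {f : ℝ × ℝ × ℝ → ℝ} (C : ℝ), Measurable f → (∀ p, |f p| ≤ C) →
      Integrable f cubeMeasure := fun C hf hC =>
    Integrable.of_bound hf.aestronglyMeasurable C (Filter.Eventually.of_forall hC)
  have Ia := int 1 ma ia
  have Ib := int 1 mb ib
  have Ic := int 1 mc ic
  have Iab := int (f := fun p => a p * b p) _ (by fun_prop) fun p => mul_bd (ia p) (ib p)
  have Ibc := int (f := fun p => b p * c p) _ (by fun_prop) fun p => mul_bd (ib p) (ic p)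
  have Iac := int (f := fun p => a p * c p) _ (by fun_prop) fun p => mul_bd (ia p) (ic p)
  have Iabc := int (f := fun p => a p * b p * c p) _ (by fun_prop)
    fun p => mul_bd (mul_bd (ia p) (ib p)) (ic p)
  -- Every integrand above is a combination of the eight multilinear monomials in `a`, `b`, `c`.
  have expand : ∀ k k1 k2 k3 k4 k5 k6 k7 : ℝ,
      ∫ p, (k + k1 * a p + k2 * b p + k3 * c p + k4 * (a p * b p) + k5 * (b p * c p)
        + k6 * (a p * c p) + k7 * (a p * b p * c p)) ∂cubeMeasure
      = k * ∫ _, 1 ∂cubeMeasure + k1 * ∫ p, a p ∂cubeMeasure + k2 * ∫ p, b p ∂cubeMeasure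
        + k3 * ∫ p, c p ∂cubeMeasure + k4 * ∫ p, a p * b p ∂cubeMeasure
        + k5 * ∫ p, b p * c p ∂cubeMeasure + k6 * ∫ p, a p * c p ∂cubeMeasure
        + k7 * ∫ p, a p * b p * c p ∂cubeMeasure := by
    intro k k1 k2 k3 k4 k5 k6 k7
    rw [integral_add (by fun_prop) (by fun_prop), integral_add (by fun_prop) (by fun_prop),
      integral_add (by fun_prop) (by fun_prop), integral_add (by fun_prop) (by fun_prop),
      integral_add (by fun_prop) (by fun_prop), integral_add (by fun_prop) (by fun_prop),
      integral_add (by fun_prop) (by fun_prop)]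
    simp only [integral_const_mul]
    rw [← integral_const_mul k, mul_one]
  have x0 := expand 1 (-1) (-1) (-1) 1 1 1 (-1)
  have x1 := expand 0 1 0 0 (-1) 0 (-1) 1
  have x2 := expand 0 0 0 0 0 0 1 (-1)
  have xq := expand 1 (-4) 0 (-4) 0 0 16 0
  have y0 : ∫ p, (1 - a p) * (1 - b p) * (1 - c p) ∂cubeMeasure = _ :=
    Eq.trans (by congr 1; ext p; ring) x0
  have y1 : ∫ p, a p * (1 - b p) * (1 - c p) ∂cubeMeasure = _ :=
    Eq.trans (by congr 1; ext p; ring) x1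
  have y2 : ∫ p, a p * c p * (1 - b p) ∂cubeMeasure = _ :=
    Eq.trans (by congr 1; ext p; ring) x2
  have yq : ∫ p, (4 * a p - 1) * (4 * c p - 1) ∂cubeMeasure = _ :=
    Eq.trans (by congr 1; ext p; ring) xq
  rw [e0, e1, e2, e3, y0, y1, y2]
  rw [yq] at eq
  linarith
end

section
/- For every graphon W, the co-cherry density is at most three times the triangle density plus 3/8; that is, d₁(W) ≤ 3·d₃(W) + 3/8. -/
/-!
Expanding the product pointwise,
`W x y (1 - W y z)(1 - W x z) = W x y - W x y W y z - W x y W x z + W x y W y z W x z`.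
Integrating over `z` and then over `x, y` turns the two middle terms into `∫ deg²` each, so
`d1 - 3 d3 = 3 ∫ (deg x - 2 (deg x)²) dx`; the integrand is at most `1/8`, because
`t - 2 t² = 1/8 - 2 (t - 1/4)²`.
-/

open MeasureTheory Real

/-- Lebesgue measure on `[0,1]`. -/
local notation "μI" => (volume.restrict (Set.Icc (0 : ℝ) 1) : Measure ℝ)

instance isProbabilityMeasure_unitInterval : IsProbabilityMeasure μI :=
  ⟨by simp⟩

lemma integrable_of_mem_Icc {α : Type*} [MeasurableSpace α] {μ : Measure α} [IsFiniteMeasure μ]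
    {f : α → ℝ} (hf : Measurable f) (h : ∀ a, f a ∈ Set.Icc (0 : ℝ) 1) : Integrable f μ :=
  Integrable.of_bound hf.aestronglyMeasurable 1
    (Filter.Eventually.of_forall fun a => by
      rw [Real.norm_eq_abs, abs_of_nonneg (h a).1]; exact (h a).2)

lemma integral_mem_Icc {α : Type*} [MeasurableSpace α] {μ : Measure α} [IsProbabilityMeasure μ]
    {f : α → ℝ} (hf : Measurable f) (h : ∀ a, f a ∈ Set.Icc (0 : ℝ) 1) :
    ∫ a, f a ∂μ ∈ Set.Icc (0 : ℝ) 1 := by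
  refine ⟨integral_nonneg fun a => (h a).1, ?_⟩
  calc ∫ a, f a ∂μ ≤ ∫ _, (1 : ℝ) ∂μ :=
        integral_mono (integrable_of_mem_Icc hf h) (integrable_const _) fun a => (h a).2
    _ = 1 := by simp

lemma integrable_sub_sub_add {α : Type*} [MeasurableSpace α] {μ : Measure α} {f g h k : α → ℝ}
    (hf : Integrable f μ) (hg : Integrable g μ) (hh : Integrable h μ) (hk : Integrable k μ) :
    Integrable (fun a => f a - g a - h a + k a) μ :=
  ((hf.sub hg).sub hh).add hk

lemma integral_sub_sub_add {α : Type*} [MeasurableSpace α] {μ : Measure α} {f g h k : α → ℝ}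
    (hf : Integrable f μ) (hg : Integrable g μ) (hh : Integrable h μ) (hk : Integrable k μ) :
    ∫ a, (f a - g a - h a + k a) ∂μ =
      ∫ a, f a ∂μ - ∫ a, g a ∂μ - ∫ a, h a ∂μ + ∫ a, k a ∂μ := by
  have hfg : Integrable (fun a => f a - g a) μ := hf.sub hg
  have hfgh : Integrable (fun a => f a - g a - h a) μ := hfg.sub hh
  rw [integral_add hfgh hk, integral_sub hfg hh, integral_sub hf hg]

lemma mul_mem_Icc {a b : ℝ} (ha : a ∈ Set.Icc (0 : ℝ) 1) (hb : b ∈ Set.Icc (0 : ℝ) 1) :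
    a * b ∈ Set.Icc (0 : ℝ) 1 :=
  ⟨mul_nonneg ha.1 hb.1, mul_le_one₀ ha.2 hb.1 hb.2⟩

namespace Graphon

lemma measurable_comp (G : Graphon) {α : Type*} [MeasurableSpace α] {f g : α → ℝ}
    (hf : Measurable f) (hg : Measurable g) : Measurable fun a => G.W (f a) (g a) :=
  G.measurable.comp (hf.prodMk hg)

lemma measurable_deg (G : Graphon) : Measurable (deg G) :=
  (StronglyMeasurable.integral_prod_right (ν := μI) G.measurable.stronglyMeasurable).measurable

lemma deg_mem_Icc (G : Graphon) (x : ℝ) : deg G x ∈ Set.Icc (0 : ℝ) 1 :=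
  integral_mem_Icc (G.measurable_comp measurable_const measurable_id) (G.mem_Icc x)

/-- The triangle density rooted at the pair `x, y`. -/
noncomputable def rootedTriangle (G : Graphon) (x y : ℝ) : ℝ :=
  ∫ z in Set.Icc (0 : ℝ) 1, G.W x y * G.W y z * G.W x z

lemma triangle_mem_Icc (G : Graphon) (x y z : ℝ) :
    G.W x y * G.W y z * G.W x z ∈ Set.Icc (0 : ℝ) 1 :=
  mul_mem_Icc (mul_mem_Icc (G.mem_Icc _ _) (G.mem_Icc _ _)) (G.mem_Icc _ _)

lemma measurable_triangle (G : Graphon) (x y : ℝ) :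
    Measurable fun z => G.W x y * G.W y z * G.W x z :=
  ((G.measurable_comp measurable_const measurable_const).mul
    (G.measurable_comp measurable_const measurable_id)).mul
    (G.measurable_comp measurable_const measurable_id)

lemma integrable_rootedTriangle (G : Graphon) :
    Integrable (fun p : ℝ × ℝ => G.rootedTriangle p.1 p.2) (Measure.prod μI μI) := by
  refine integrable_of_mem_Icc ?_ fun p =>
    integral_mem_Icc (G.measurable_triangle p.1 p.2) (G.triangle_mem_Icc p.1 p.2)
  have h : Measurable fun q : (ℝ × ℝ) × ℝ =>
      G.W q.1.1 q.1.2 * G.W q.1.2 q.2 * G.W q.1.1 q.2 :=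
    ((G.measurable_comp (by fun_prop) (by fun_prop)).mul
      (G.measurable_comp (by fun_prop) (by fun_prop))).mul
      (G.measurable_comp (by fun_prop) (by fun_prop))
  exact (StronglyMeasurable.integral_prod_right (ν := μI) h.stronglyMeasurable).measurable

/-- The integral over the third vertex of the co-cherry integrand. -/
lemma integral_cocherry (G : Graphon) (x y : ℝ) :
    ∫ z in Set.Icc (0 : ℝ) 1, G.W x y * (1 - G.W y z) * (1 - G.W x z) =
      G.W x y - G.W x y * deg G y - G.W x y * deg G x + G.rootedTriangle x y := by
  have hW (u : ℝ) : Integrable (fun z => G.W u z) μI :=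
    integrable_of_mem_Icc (G.measurable_comp measurable_const measurable_id) (G.mem_Icc u)
  have hT : Integrable (fun z => G.W x y * G.W y z * G.W x z) μI :=
    integrable_of_mem_Icc (G.measurable_triangle x y) (G.triangle_mem_Icc x y)
  have hexp : (fun z => G.W x y * (1 - G.W y z) * (1 - G.W x z)) = fun z =>
      G.W x y - G.W x y * G.W y z - G.W x y * G.W x z + G.W x y * G.W y z * G.W x z := by
    funext z; ring
  have hc : Integrable (fun _ : ℝ => G.W x y) μI := integrable_const _
  rw [hexp, integral_sub_sub_add hc ((hW y).const_mul _) ((hW x).const_mul _) hT,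
    integral_const_mul, integral_const_mul]
  simp [deg, rootedTriangle]

lemma integral_deg_sub_le (G : Graphon) :
    ∫ x, deg G x ∂μI - 2 * ∫ x, deg G x * deg G x ∂μI ≤ 1 / 8 := by
  have h1 : Integrable (deg G) μI := integrable_of_mem_Icc G.measurable_deg G.deg_mem_Icc
  have h2 : Integrable (fun x => deg G x * deg G x) μI :=
    integrable_of_mem_Icc (G.measurable_deg.mul G.measurable_deg)
      fun x => mul_mem_Icc (G.deg_mem_Icc x) (G.deg_mem_Icc x)
  rw [← integral_const_mul, ← integral_sub h1 (h2.const_mul 2)]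
  calc ∫ x, (deg G x - 2 * (deg G x * deg G x)) ∂μI ≤ ∫ _, (1 / 8 : ℝ) ∂μI :=
        integral_mono (h1.sub (h2.const_mul 2)) (integrable_const _) fun x => by
          change deg G x - 2 * (deg G x * deg G x) ≤ 1 / 8
          nlinarith [sq_nonneg (deg G x - 1 / 4)]
    _ = 1 / 8 := by simp

end Graphon

theorem cocherry_le_three_triangle_add (G : Graphon) :
    d1 G ≤ 3 * d3 G + 3 / 8 := by
  have iW : Integrable (fun p : ℝ × ℝ => G.W p.1 p.2) (Measure.prod μI μI) :=
    integrable_of_mem_Icc G.measurable fun p => G.mem_Icc p.1 p.2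
  have iWy : Integrable (fun p : ℝ × ℝ => G.W p.1 p.2 * deg G p.2) (Measure.prod μI μI) :=
    integrable_of_mem_Icc (G.measurable.mul (G.measurable_deg.comp measurable_snd))
      fun p => mul_mem_Icc (G.mem_Icc p.1 p.2) (G.deg_mem_Icc p.2)
  have iWx : Integrable (fun p : ℝ × ℝ => G.W p.1 p.2 * deg G p.1) (Measure.prod μI μI) :=
    integrable_of_mem_Icc (G.measurable.mul (G.measurable_deg.comp measurable_fst))
      fun p => mul_mem_Icc (G.mem_Icc p.1 p.2) (G.deg_mem_Icc p.1)
  have iT := G.integrable_rootedTriangle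
  have eW : ∫ p, G.W p.1 p.2 ∂(Measure.prod μI μI) = ∫ x, deg G x ∂μI := integral_prod _ iW
  have eWx : ∫ p, G.W p.1 p.2 * deg G p.1 ∂(Measure.prod μI μI)
      = ∫ x, deg G x * deg G x ∂μI := by
    rw [integral_prod _ iWx]
    simp only [integral_mul_const]
    rfl
  have eWy : ∫ p, G.W p.1 p.2 * deg G p.2 ∂(Measure.prod μI μI)
      = ∫ x, deg G x * deg G x ∂μI := by
    rw [integral_prod_symm _ iWy]
    simp only [integral_mul_const]
    refine integral_congr_ae (Filter.Eventually.of_forall fun y => ?_)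
    simp only [G.symm _ y, deg]
  have eT : ∫ p, G.rootedTriangle p.1 p.2 ∂(Measure.prod μI μI) = d3 G := integral_prod _ iT
  have e1 : d1 G = 3 * ∫ p, (G.W p.1 p.2 - G.W p.1 p.2 * deg G p.2 - G.W p.1 p.2 * deg G p.1
      + G.rootedTriangle p.1 p.2) ∂(Measure.prod μI μI) := by
    rw [integral_prod _ (integrable_sub_sub_add iW iWy iWx iT)]
    simp only [d1, G.integral_cocherry]
  rw [e1, integral_sub_sub_add iW iWy iWx iT, eW, eWx, eWy, eT]
  linarith [G.integral_deg_sub_le]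
end

section
/- Let σ ∈ [1/3,1/2). For every graphon W with triangle density d₃(W) = h_{B,3}(σ), the co-cherry density satisfies d₁(W) ≤ h_{B,1}(σ). -/
/-!
The extremal configuration consists of three cliques of sizes `σ, σ, 1 - 2σ`. Write `p` for the
edge density of `W`, `D` for the mean of the squared degree, `T = d₃(W)`, and let `e = 1 - p`
and `t` be the edge and triangle densities of the complement `U = 1 - W`. Expanding gives
`d₁ = 3p - 6D + 3T` (`Graphon.d1_eq`) and `t = 1 - 3p + 3D - T` (`Graphon.compl_d3`), hence also
`d₁ = T - 1 + 3e - 2t`. Let `p(σ) = 1 - 4σ + 6σ²` be the edge density of the extremal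
configuration.

If `p ≤ p(σ)`, the trivial inequality `T ≤ D` gives `d₁ ≤ 3(p - T) ≤ 3(p(σ) - T) = h_{B,1}(σ)`.

If `p ≥ p(σ)`, then `e ≤ 4σ - 6σ² ≤ 2/3`, and the sharp lower bound on `t` in terms of `e` is
needed. It is used in the following form: for some `c ∈ [0,3]`,
`1 - c + e c²/2 - t c³/6 ≤ 0` (`Graphon.exists_cliquePoly_nonpos`). With `s = 1/c` this says
`t ≥ 6s³ - 6s² + 3es`, and an elementary computation (`edge_sub_tri_le`) concludes.

To prove this form of the bound, for a weight `m : [0,1] → [0,∞)` put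
`Φ(m) = 1 - ∫ m + ½ ∬ m m U - ⅙ ∭ m m m U U U`. The derivative of `Φ` at `m` in the direction of
a vertex `v` is `-(1 - ∫ k + ½ ∬ k k U)` with `k = U(v,·) m`, which is at most `-Φ(k)`, and
`0 ≤ k ≤ m`. So if `Φ ≥ 0` at all weights bounded by `c`, then `Φ` is decreasing on this box and
its minimum there is `Φ(c)`, the value at the constant weight. If `Φ(c) > 0` for all
`c ∈ [0,3]`, then by continuity the box can be enlarged in small steps up to `c = 3`. At the
constant weight `3` this yields `Φ(3) > 0` and `d/dc Φ(c) ≤ 0`, that is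
`-2 + 9e/2 - 9t/2 > 0` and `1 - 3e + 9t/2 ≥ 0`; adding these gives `e > 2/3`, a contradiction.
-/

open MeasureTheory Real

/-! ### Averaging over triples of points -/

/-- A bounded measurable function of three real variables. -/
def Good (f : ℝ → ℝ → ℝ → ℝ) : Prop :=
  Measurable (fun p : ℝ × ℝ × ℝ => f p.1 p.2.1 p.2.2) ∧ ∃ C : ℝ, ∀ x y z, |f x y z| ≤ C

/-- The average of `f` over `[0,1]³`, as an iterated integral. -/
noncomputable def I3 (f : ℝ → ℝ → ℝ → ℝ) : ℝ :=
  ∫ x in Set.Icc (0 : ℝ) 1, ∫ y in Set.Icc (0 : ℝ) 1, ∫ z in Set.Icc (0 : ℝ) 1, f x y z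

/-- Lebesgue measure on `[0,1]`, seen as a measure on `ℝ`. -/
noncomputable abbrev unitVol : Measure ℝ := volume.restrict (Set.Icc (0 : ℝ) 1)

instance : IsProbabilityMeasure unitVol := ⟨by simp⟩

namespace Good

variable {f g : ℝ → ℝ → ℝ → ℝ}

lemma const (c : ℝ) : Good (fun _ _ _ => c) := ⟨measurable_const, |c|, fun _ _ _ => le_rfl⟩

lemma add (hf : Good f) (hg : Good g) : Good (fun x y z => f x y z + g x y z) := by
  obtain ⟨mf, C, hC⟩ := hf
  obtain ⟨mg, D, hD⟩ := hg
  exact ⟨mf.add mg, C + D, fun x y z =>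
    (abs_add_le _ _).trans (add_le_add (hC x y z) (hD x y z))⟩

lemma mul (hf : Good f) (hg : Good g) : Good (fun x y z => f x y z * g x y z) := by
  obtain ⟨mf, C, hC⟩ := hf
  obtain ⟨mg, D, hD⟩ := hg
  refine ⟨mf.mul mg, C * D, fun x y z => ?_⟩
  rw [abs_mul]
  exact mul_le_mul (hC x y z) (hD x y z) (abs_nonneg _) ((abs_nonneg _).trans (hC x y z))

lemma cmul (hf : Good f) (c : ℝ) : Good (fun x y z => c * f x y z) := (const c).mul hf

lemma sub (hf : Good f) (hg : Good g) : Good (fun x y z => f x y z - g x y z) := by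
  have h := hf.add (hg.cmul (-1))
  simpa [sub_eq_add_neg] using h

lemma integrable (hf : Good f) :
    Integrable (fun p : ℝ × ℝ × ℝ => f p.1 p.2.1 p.2.2) (unitVol.prod (unitVol.prod unitVol)) := by
  obtain ⟨mf, C, hC⟩ := hf
  exact Integrable.of_bound mf.aestronglyMeasurable C (ae_of_all _ fun p => hC _ _ _)

lemma integrable_slice (hf : Good f) (x : ℝ) :
    Integrable (fun p : ℝ × ℝ => f x p.1 p.2) (unitVol.prod unitVol) := by
  obtain ⟨mf, C, hC⟩ := hf
  exact Integrable.of_bound (mf.comp (measurable_const.prodMk measurable_id)).aestronglyMeasurable C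
    (ae_of_all _ fun p => hC _ _ _)

lemma I3_eq (hf : Good f) :
    I3 f = ∫ p, f p.1 p.2.1 p.2.2 ∂(unitVol.prod (unitVol.prod unitVol)) := by
  rw [integral_prod _ hf.integrable]
  unfold I3
  refine integral_congr_ae (ae_of_all _ fun x => ?_)
  exact (integral_prod _ (hf.integrable_slice x)).symm

end Good

section I3lemmas

variable {f g : ℝ → ℝ → ℝ → ℝ}

lemma I3_add (hf : Good f) (hg : Good g) :
    I3 (fun x y z => f x y z + g x y z) = I3 f + I3 g := by
  rw [(hf.add hg).I3_eq, hf.I3_eq, hg.I3_eq, integral_add hf.integrable hg.integrable]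

lemma I3_sub (hf : Good f) (hg : Good g) :
    I3 (fun x y z => f x y z - g x y z) = I3 f - I3 g := by
  rw [(hf.sub hg).I3_eq, hf.I3_eq, hg.I3_eq, integral_sub hf.integrable hg.integrable]

lemma I3_cmul (c : ℝ) (f : ℝ → ℝ → ℝ → ℝ) :
    I3 (fun x y z => c * f x y z) = c * I3 f := by
  simp only [I3, integral_const_mul]

lemma I3_const (c : ℝ) : I3 (fun _ _ _ => c) = c := by
  simp [I3]

lemma I3_mono (hf : Good f) (hg : Good g)
    (h : ∀ x y z, f x y z ≤ g x y z) : I3 f ≤ I3 g := by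
  rw [hf.I3_eq, hg.I3_eq]
  exact integral_mono hf.integrable hg.integrable fun p => h _ _ _

lemma I3_nonneg (h : ∀ x y z, 0 ≤ f x y z) : 0 ≤ I3 f :=
  integral_nonneg fun x => integral_nonneg fun y => integral_nonneg fun z => h x y z

lemma I3_swap12 (hf : Good f) : I3 (fun x y z => f y x z) = I3 f := by
  have hsw : Good (fun x y z => f y x z) := by
    obtain ⟨mf, C, hC⟩ := hf
    refine ⟨?_, C, fun x y z => hC y x z⟩
    exact mf.comp (g := fun p : ℝ × ℝ × ℝ => f p.1 p.2.1 p.2.2)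
      (f := fun p : ℝ × ℝ × ℝ => (p.2.1, p.1, p.2.2)) (by fun_prop)
  have h2 : Integrable (Function.uncurry fun x y => ∫ z in Set.Icc (0 : ℝ) 1, f y x z)
      (unitVol.prod unitVol) := by
    have h := (measurePreserving_prodAssoc unitVol unitVol unitVol).integrable_comp_of_integrable
      hsw.integrable
    exact h.integral_prod_left
  unfold I3
  exact integral_integral_swap h2

lemma I3_swap23 (hf : Good f) : I3 (fun x y z => f x z y) = I3 f := by
  unfold I3
  refine integral_congr_ae (ae_of_all _ fun x => ?_)
  refine integral_integral_swap (f := fun y z => f x z y) ?_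
  exact (hf.integrable_slice x).swap

end I3lemmas

/-- A bounded measurable function of one real variable. -/
def Good1 (m : ℝ → ℝ) : Prop := Measurable m ∧ ∃ C : ℝ, ∀ x, |m x| ≤ C

namespace Good1

variable {m : ℝ → ℝ}

lemma fst (h : Good1 m) : Good (fun x _ _ => m x) := by
  obtain ⟨mm, C, hC⟩ := h
  exact ⟨by fun_prop, C, fun x _ _ => hC x⟩

lemma snd (h : Good1 m) : Good (fun _ y _ => m y) := by
  obtain ⟨mm, C, hC⟩ := h
  exact ⟨by fun_prop, C, fun _ y _ => hC y⟩

lemma thd (h : Good1 m) : Good (fun _ _ z => m z) := by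
  obtain ⟨mm, C, hC⟩ := h
  exact ⟨by fun_prop, C, fun _ _ z => hC z⟩

end Good1

namespace Graphon

variable (G : Graphon)

lemma nonneg (x y : ℝ) : 0 ≤ G.W x y := (G.mem_Icc x y).1

lemma le_one (x y : ℝ) : G.W x y ≤ 1 := (G.mem_Icc x y).2

lemma abs_le (x y : ℝ) : |G.W x y| ≤ 1 := by
  rw [abs_of_nonneg (G.nonneg x y)]
  exact G.le_one x y

lemma good12 : Good (fun x y _ => G.W x y) :=
  ⟨G.measurable.comp (g := Function.uncurry G.W)
    (f := fun p : ℝ × ℝ × ℝ => (p.1, p.2.1)) (by fun_prop), 1, fun x y _ => G.abs_le x y⟩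

lemma good23 : Good (fun _ y z => G.W y z) :=
  ⟨G.measurable.comp (g := Function.uncurry G.W)
    (f := fun p : ℝ × ℝ × ℝ => (p.2.1, p.2.2)) (by fun_prop), 1, fun _ y z => G.abs_le y z⟩

lemma good13 : Good (fun x _ z => G.W x z) :=
  ⟨G.measurable.comp (g := Function.uncurry G.W)
    (f := fun p : ℝ × ℝ × ℝ => (p.1, p.2.2)) (by fun_prop), 1, fun x _ z => G.abs_le x z⟩

lemma goodTri : Good (fun x y z => G.W x y * G.W y z * G.W x z) :=
  (G.good12.mul G.good23).mul G.good13

/-- The complementary graphon `1 - W`. -/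
def compl : Graphon where
  W x y := 1 - G.W x y
  measurable := by
    have h : Measurable fun p : ℝ × ℝ => 1 - Function.uncurry G.W p :=
      measurable_const.sub G.measurable
    exact h
  mem_Icc x y := ⟨by linarith [G.le_one x y], by linarith [G.nonneg x y]⟩
  symm x y := by rw [G.symm]

end Graphon

/-! ### The truncated clique polynomial of a weighted graphon -/

namespace Good1

variable {m h : ℝ → ℝ}

lemma const (c : ℝ) : Good1 (fun _ => c) := ⟨measurable_const, |c|, fun _ => le_rfl⟩

lemma of_mem {c : ℝ} (hm : Measurable m) (hb : ∀ x, m x ∈ Set.Icc 0 c) : Good1 m :=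
  ⟨hm, c, fun x => by rw [abs_of_nonneg (hb x).1]; exact (hb x).2⟩

lemma add_mul (hm : Good1 m) (hh : Good1 h) (θ : ℝ) : Good1 (fun x => m x + θ * h x) := by
  obtain ⟨mm, C, hC⟩ := hm
  obtain ⟨mh, D, hD⟩ := hh
  refine ⟨mm.add (mh.const_mul θ), C + |θ| * D, fun x => (abs_add_le _ _).trans ?_⟩
  rw [abs_mul]
  exact add_le_add (hC x) (mul_le_mul_of_nonneg_left (hD x) (abs_nonneg _))

end Good1

namespace Graphon

variable (G : Graphon)

/-- The total mass of the weight `h`. -/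
noncomputable def mass (h : ℝ → ℝ) : ℝ := I3 (fun x _ _ => h x)

/-- The edge density with the two endpoints weighted by `h` and `k`. -/
noncomputable def edge (h k : ℝ → ℝ) : ℝ := I3 (fun x y _ => h x * k y * G.W x y)

/-- The triangle density with the three vertices weighted by `h`, `k` and `l`. -/
noncomputable def tri (h k l : ℝ → ℝ) : ℝ :=
  I3 (fun x y z => h x * k y * l z * (G.W x y * G.W y z * G.W x z))

/-- The clique polynomial of the graphon with vertex weight `m`, with alternating signs and
truncated after the triangles. -/
noncomputable def cliquePoly (m : ℝ → ℝ) : ℝ :=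
  1 - mass m + G.edge m m / 2 - G.tri m m m / 6

/-- Minus the derivative of `cliquePoly` at the weight `m` in the direction `h`. -/
noncomputable def linkForm (h m : ℝ → ℝ) : ℝ :=
  mass h - G.edge h m + G.tri h m m / 2

variable {G} {h k l m : ℝ → ℝ}

lemma good_edge (hh : Good1 h) (hk : Good1 k) : Good (fun x y _ => h x * k y * G.W x y) :=
  (hh.fst.mul hk.snd).mul G.good12

lemma good_tri (hh : Good1 h) (hk : Good1 k) (hl : Good1 l) :
    Good (fun x y z => h x * k y * l z * (G.W x y * G.W y z * G.W x z)) :=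
  ((hh.fst.mul hk.snd).mul hl.thd).mul G.goodTri

lemma mass_add (hm : Good1 m) (hh : Good1 h) (θ : ℝ) :
    mass (fun x => m x + θ * h x) = mass m + θ * mass h := by
  unfold mass
  rw [← I3_cmul, ← I3_add hm.fst (hh.fst.cmul θ)]

lemma edge_add (hm : Good1 m) (hh : Good1 h) (hk : Good1 k) (θ : ℝ) :
    G.edge (fun x => m x + θ * h x) k = G.edge m k + θ * G.edge h k := by
  unfold edge
  rw [← I3_cmul, ← I3_add (good_edge hm hk) ((good_edge hh hk).cmul θ)]
  congr 1; ext x y z; ring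

lemma tri_add (hm : Good1 m) (hh : Good1 h) (hk : Good1 k) (hl : Good1 l) (θ : ℝ) :
    G.tri (fun x => m x + θ * h x) k l = G.tri m k l + θ * G.tri h k l := by
  unfold tri
  rw [← I3_cmul, ← I3_add (good_tri hm hk hl) ((good_tri hh hk hl).cmul θ)]
  congr 1; ext x y z; ring

lemma edge_comm (hh : Good1 h) (hk : Good1 k) : G.edge h k = G.edge k h := by
  unfold edge
  rw [← I3_swap12 (good_edge hk hh)]
  congr 1; ext x y z; rw [G.symm y x]; ring

lemma tri_comm12 (hh : Good1 h) (hk : Good1 k) (hl : Good1 l) :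
    G.tri h k l = G.tri k h l := by
  unfold tri
  rw [← I3_swap12 (good_tri hk hh hl)]
  congr 1; ext x y z; rw [G.symm y x]; ring

lemma tri_comm23 (hh : Good1 h) (hk : Good1 k) (hl : Good1 l) :
    G.tri h k l = G.tri h l k := by
  unfold tri
  rw [← I3_swap23 (good_tri hh hl hk)]
  congr 1; ext x y z; rw [G.symm z y]; ring

lemma edge_quad (hm : Good1 m) (hh : Good1 h) (θ : ℝ) :
    G.edge (fun x => m x + θ * h x) (fun x => m x + θ * h x)
      = G.edge m m + 2 * θ * G.edge h m + θ ^ 2 * G.edge h h := by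
  have hs := hm.add_mul hh θ
  rw [edge_add hm hh hs, edge_comm hm hs, edge_comm hh hs, edge_add hm hh hm, edge_add hm hh hh,
    edge_comm hm hh]
  ring

lemma tri_quad (hk : Good1 k) (hm : Good1 m) (hh : Good1 h) (θ : ℝ) :
    G.tri k (fun x => m x + θ * h x) (fun x => m x + θ * h x)
      = G.tri k m m + 2 * θ * G.tri k h m + θ ^ 2 * G.tri k h h := by
  have hs := hm.add_mul hh θ
  have e2 : ∀ {l : ℝ → ℝ}, Good1 l → G.tri k (fun x => m x + θ * h x) l
      = G.tri k m l + θ * G.tri k h l := fun hl => by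
    rw [tri_comm12 hk hs hl, tri_add hm hh hk hl, tri_comm12 hm hk hl, tri_comm12 hh hk hl]
  rw [e2 hs, tri_comm23 hk hm hs, tri_comm23 hk hh hs, e2 hm, e2 hh, tri_comm23 hk hm hh]
  ring

lemma tri_cubic (hm : Good1 m) (hh : Good1 h) (θ : ℝ) :
    G.tri (fun x => m x + θ * h x) (fun x => m x + θ * h x) (fun x => m x + θ * h x)
      = G.tri m m m + 3 * θ * G.tri h m m + 3 * θ ^ 2 * G.tri h h m + θ ^ 3 * G.tri h h h := by
  have hs := hm.add_mul hh θ
  rw [tri_add hm hh hs hs, tri_quad hm hm hh, tri_quad hh hm hh, tri_comm12 hm hh hm,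
    tri_comm12 hm hh hh, tri_comm23 hh hm hh]
  ring

lemma cliquePoly_line (hm : Good1 m) (hh : Good1 h) (θ : ℝ) :
    G.cliquePoly (fun x => m x + θ * h x) =
      1 - (mass m + θ * mass h) + (G.edge m m + 2 * θ * G.edge h m + θ ^ 2 * G.edge h h) / 2
      - (G.tri m m m + 3 * θ * G.tri h m m + 3 * θ ^ 2 * G.tri h h m
          + θ ^ 3 * G.tri h h h) / 6 := by
  rw [cliquePoly, mass_add hm hh, edge_quad hm hh, tri_cubic hm hh]

lemma linkForm_line (hm : Good1 m) (hh : Good1 h) (θ : ℝ) :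
    G.linkForm h (fun x => m x + θ * h x) =
      mass h - (G.edge h m + θ * G.edge h h)
      + (G.tri h m m + 2 * θ * G.tri h h m + θ ^ 2 * G.tri h h h) / 2 := by
  have hs := hm.add_mul hh θ
  rw [linkForm, edge_comm hh hs, edge_add hm hh hh, tri_quad hh hm hh, edge_comm hm hh]

lemma hasDerivAt_cliquePoly (hm : Good1 m) (hh : Good1 h) (θ : ℝ) :
    HasDerivAt (fun θ : ℝ => G.cliquePoly (fun x => m x + θ * h x))
      (-G.linkForm h (fun x => m x + θ * h x)) θ := by
  simp only [cliquePoly_line hm hh, linkForm_line hm hh]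
  have i := hasDerivAt_id' θ
  have p2 := hasDerivAt_pow 2 θ
  have p3 := hasDerivAt_pow 3 θ
  refine (((((i.mul_const (mass h)).const_add (mass m)).const_sub 1).add
    (((((i.const_mul 2).mul_const (G.edge h m)).const_add (G.edge m m)).add
      (p2.mul_const (G.edge h h))).div_const 2)).sub
    ((((((i.const_mul 3).mul_const (G.tri h m m)).const_add (G.tri m m m)).add
      ((p2.const_mul 3).mul_const (G.tri h h m))).add
      (p3.mul_const (G.tri h h h))).div_const 6)).congr_deriv ?_
  push_cast
  ring

/-- `cliquePoly` is nonnegative at every weight between `0` and `c`. -/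
def BoxNonneg (G : Graphon) (c : ℝ) : Prop :=
  ∀ m : ℝ → ℝ, Measurable m → (∀ x, m x ∈ Set.Icc 0 c) → 0 ≤ G.cliquePoly m

/-- Minus the derivative of `cliquePoly` at `m` in the direction of a vertex `v` is `cliquePoly` at
the weight `W(v,·) m` plus a sixth of a triangle density. Since that weight is again bounded
by `c`, the derivative of `cliquePoly` in every nonnegative direction is nonpositive. -/
lemma BoxNonneg.linkForm_nonneg {c : ℝ} (hc : G.BoxNonneg c) (hm : Measurable m)
    (hb : ∀ x, m x ∈ Set.Icc 0 c) (hh : Good1 h) (h0 : ∀ x, 0 ≤ h x) :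
    0 ≤ G.linkForm h m := by
  have gm := Good1.of_mem hm hb
  have key : G.linkForm h m = I3 (fun x y z => h x * (1 - m y * G.W x y
      + 1 / 2 * (m y * m z * (G.W x y * G.W y z * G.W x z)))) := by
    have g1 := good_edge (G := G) hh gm
    have g2 := (good_tri (G := G) hh gm gm).cmul (1 / 2)
    have e : (fun x y z => h x * (1 - m y * G.W x y
        + 1 / 2 * (m y * m z * (G.W x y * G.W y z * G.W x z))))
        = fun x y z => h x - h x * m y * G.W x y
          + 1 / 2 * (h x * m y * m z * (G.W x y * G.W y z * G.W x z)) := by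
      ext x y z; ring
    rw [e, I3_add (hh.fst.sub g1) g2, I3_sub hh.fst g1, I3_cmul, linkForm, mass, edge, tri]
    ring
  rw [key]
  refine integral_nonneg fun x => ?_
  simp only [integral_const_mul]
  refine mul_nonneg (h0 x) ?_
  set k : ℝ → ℝ := fun y => G.W x y * m y with hk
  have mk : Measurable k :=
    (G.measurable.comp (measurable_const.prodMk measurable_id) :
      Measurable fun y => G.W x y).mul hm
  have bk : ∀ y, k y ∈ Set.Icc 0 c := fun y =>
    ⟨mul_nonneg (G.nonneg x y) (hb y).1,
      (mul_le_of_le_one_left (hb y).1 (G.le_one x y)).trans (hb y).2⟩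
  have gk := Good1.of_mem mk bk
  have hpos := hc k mk bk
  have htri : 0 ≤ G.tri k k k := I3_nonneg fun x y z => by
    have := G.nonneg x y; have := G.nonneg y z; have := G.nonneg x z
    have := (bk x).1; have := (bk y).1; have := (bk z).1
    positivity
  -- the inner double integral, as a triple average with an idle last variable
  have e1 : I3 (fun y z _ => 1 - k y + 1 / 2 * (k y * k z * G.W y z))
      = 1 - mass k + 1 / 2 * G.edge k k := by
    rw [I3_add ((Good.const 1).sub gk.fst) ((good_edge gk gk).cmul _),
      I3_sub (Good.const 1) gk.fst, I3_const, I3_cmul, mass, edge]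
  have e2 : I3 (fun y z _ => 1 - k y + 1 / 2 * (k y * k z * G.W y z))
      = ∫ y in Set.Icc (0 : ℝ) 1, ∫ z in Set.Icc (0 : ℝ) 1, (1 - m y * G.W x y
      + 1 / 2 * (m y * m z * (G.W x y * G.W y z * G.W x z))) := by
    simp only [I3, integral_const, probReal_univ, smul_eq_mul, one_mul, hk]
    refine integral_congr_ae (ae_of_all _ fun y => integral_congr_ae (ae_of_all _ fun z => ?_))
    ring
  rw [← e2, e1]
  unfold cliquePoly at hpos
  linarith

/-- On a box where `cliquePoly` is nonnegative, its minimum is attained at the top corner. -/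
lemma BoxNonneg.corner_le {c : ℝ} (hc : G.BoxNonneg c) (hm : Measurable m)
    (hb : ∀ x, m x ∈ Set.Icc 0 c) : G.cliquePoly (fun _ => c) ≤ G.cliquePoly m := by
  have gm := Good1.of_mem hm hb
  have mh : Measurable fun x => c - m x := measurable_const.sub hm
  have bh : ∀ x, c - m x ∈ Set.Icc 0 c := fun x =>
    ⟨by linarith [(hb x).2], by linarith [(hb x).1]⟩
  have gh := Good1.of_mem mh bh
  have hd := fun θ => hasDerivAt_cliquePoly (G := G) gm gh θ
  have anti : AntitoneOn (fun θ : ℝ => G.cliquePoly (fun x => m x + θ * (c - m x)))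
      (Set.Icc 0 1) := by
    refine antitoneOn_of_deriv_nonpos (convex_Icc 0 1)
      (fun θ _ => (hd θ).continuousAt.continuousWithinAt)
      (fun θ _ => (hd θ).differentiableAt.differentiableWithinAt) fun θ hθ => ?_
    rw [interior_Icc] at hθ
    rw [(hd θ).deriv]
    have := hc.linkForm_nonneg (m := fun x => m x + θ * (c - m x)) (hm.add (mh.const_mul θ))
      (fun x => ⟨add_nonneg (hb x).1 (mul_nonneg hθ.1.le (bh x).1),
        by nlinarith [(bh x).1, hθ.2]⟩) gh (fun x => (bh x).1)
    linarith
  have := anti (by simp) (by simp) zero_le_one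
  simpa using this

lemma cliquePoly_const (c : ℝ) : G.cliquePoly (fun _ => c)
    = 1 - c + c ^ 2 * I3 (fun x y _ => G.W x y) / 2 - c ^ 3 * d3 G / 6 := by
  have e1 : G.edge (fun _ => c) (fun _ => c) = c ^ 2 * I3 (fun x y _ => G.W x y) := by
    rw [edge, ← I3_cmul]
    congr 1; ext x y z; ring
  have e2 : G.tri (fun _ => c) (fun _ => c) (fun _ => c) = c ^ 3 * d3 G := by
    change _ = c ^ 3 * I3 (fun x y z => G.W x y * G.W y z * G.W x z)
    rw [tri, ← I3_cmul]
    congr 1; ext x y z; ring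
  rw [cliquePoly, e1, e2, mass, I3_const]

/-- Nonnegativity on the box of size `c`, with value at least `ε` at its top corner, extends to
the slightly larger box of size `c'`: compare a weight `m` there with its rescaling `(c / c') m`,
where `cliquePoly` is at least `ε`. -/
lemma BoxNonneg.enlarge {c c' ε : ℝ} (h0 : 0 ≤ c) (hcc : c < c') (h3 : c' ≤ 3)
    (hε : (c' - c) * (11 / 2) ≤ ε) (hc : G.BoxNonneg c)
    (hpos : ε ≤ G.cliquePoly (fun _ => c)) : G.BoxNonneg c' := by
  intro m hm hb
  have gm := Good1.of_mem hm hb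
  have c'0 : 0 < c' := h0.trans_lt hcc
  set s := c / c' with hs
  have hsc : s * c' = c := div_mul_cancel₀ _ c'0.ne'
  have s0 : 0 ≤ s := div_nonneg h0 c'0.le
  have s1 : s ≤ 1 := (div_le_one c'0).2 hcc.le
  have hsm := hc.corner_le (m := fun x => s * m x) (hm.const_mul s) fun x =>
    ⟨mul_nonneg s0 (hb x).1, by nlinarith [(hb x).2]⟩
  have e : G.cliquePoly (fun x => s * m x)
      = 1 - s * mass m + s ^ 2 * G.edge m m / 2 - s ^ 3 * G.tri m m m / 6 := by
    have e1 : mass (fun x => s * m x) = s * mass m := by rw [mass, mass, ← I3_cmul]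
    have e2 : G.edge (fun x => s * m x) (fun x => s * m x) = s ^ 2 * G.edge m m := by
      rw [edge, edge, ← I3_cmul]
      congr 1; ext x y z; ring
    have e3 : G.tri (fun x => s * m x) (fun x => s * m x) (fun x => s * m x)
        = s ^ 3 * G.tri m m m := by
      rw [tri, tri, ← I3_cmul]
      congr 1; ext x y z; ring
    rw [cliquePoly, e1, e2, e3]
  have ha : mass m ≤ c' := by
    rw [← I3_const c']
    exact I3_mono gm.fst (Good.const _) fun x _ _ => (hb x).2
  have hedge : 0 ≤ G.edge m m := I3_nonneg fun x y z =>
    mul_nonneg (mul_nonneg (hb x).1 (hb y).1) (G.nonneg _ _)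
  have htri0 : 0 ≤ G.tri m m m := I3_nonneg fun x y z => by
    have := G.nonneg x y; have := G.nonneg y z; have := G.nonneg x z
    have := (hb x).1; have := (hb y).1; have := (hb z).1
    positivity
  have htri : G.tri m m m ≤ c' ^ 3 := by
    rw [← I3_const (c' ^ 3)]
    refine I3_mono (good_tri gm gm gm) (Good.const _) fun x y z => ?_
    have hx := hb x; have hy := hb y; have hz := hb z
    have i1 : m x * m y * m z ≤ c' * c' * c' :=
      mul_le_mul (mul_le_mul hx.2 hy.2 hy.1 c'0.le) hz.2 hz.1 (by positivity)
    have i2 : G.W x y * G.W y z * G.W x z ≤ 1 :=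
      mul_le_one₀ (mul_le_one₀ (G.le_one _ _) (G.nonneg _ _) (G.le_one _ _)) (G.nonneg _ _)
        (G.le_one _ _)
    calc _ ≤ m x * m y * m z * 1 := mul_le_mul_of_nonneg_left i2
          (mul_nonneg (mul_nonneg hx.1 hy.1) hz.1)
      _ ≤ c' ^ 3 := by linarith [i1, pow_succ c' 2, pow_two c']
  have hA : (1 - s) * mass m ≤ c' - c := by nlinarith
  have hB : 0 ≤ (1 - s ^ 2) * G.edge m m := mul_nonneg (by nlinarith) hedge
  have hC : (1 - s ^ 3) * G.tri m m m ≤ 27 * (c' - c) := by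
    have q1 : (1 - s ^ 3) ≤ 3 * (1 - s) := by nlinarith [mul_nonneg s0 s0, sq_nonneg (1 - s)]
    have q2 : (1 - s) * c' ^ 3 = (c' - c) * c' ^ 2 := by rw [← hsc]; ring
    have q3 : c' ^ 2 ≤ 9 := by nlinarith
    have q4 : (1 - s) * G.tri m m m ≤ (1 - s) * c' ^ 3 :=
      mul_le_mul_of_nonneg_left htri (by linarith)
    have q5 := mul_le_mul_of_nonneg_right q1 htri0
    have q6 := mul_le_mul_of_nonneg_left q3 (sub_nonneg.2 hcc.le)
    linarith
  rw [e] at hsm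
  unfold cliquePoly at hpos ⊢
  unfold cliquePoly at hsm
  linarith

/-- If `cliquePoly` is positive along the constant weights up to `3`, it is nonnegative on the
whole box of size `3`. -/
lemma boxNonneg_three (hpos : ∀ c ∈ Set.Icc (0 : ℝ) 3, 0 < G.cliquePoly (fun _ => c)) :
    G.BoxNonneg 3 := by
  obtain ⟨ε, ε0, hε⟩ : ∃ ε > 0, ∀ c ∈ Set.Icc (0 : ℝ) 3, ε ≤ G.cliquePoly (fun _ => c) := by
    have hcont : ContinuousOn (fun c : ℝ => G.cliquePoly (fun _ => c)) (Set.Icc 0 3) := by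
      simp only [cliquePoly_const]
      fun_prop
    obtain ⟨c, hc, hmin⟩ := isCompact_Icc.exists_isMinOn ⟨0, by simp⟩ hcont
    exact ⟨_, hpos c hc, fun d hd => hmin hd⟩
  obtain ⟨N, hN⟩ := exists_nat_gt (33 / 2 / ε)
  have N0 : (0 : ℝ) < N := lt_of_le_of_lt (by positivity) hN
  rw [div_lt_iff₀ ε0] at hN
  have step : ∀ j : ℕ, j ≤ N → G.BoxNonneg (3 * j / N) := by
    intro j
    induction j with
    | zero =>
      intro _ m hm hb
      have : m = fun _ => 0 := by
        ext x
        have := hb x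
        simp only [Nat.cast_zero, mul_zero, zero_div] at this
        exact le_antisymm this.2 this.1
      rw [this]
      exact (hpos 0 (by simp)).le
    | succ j ih =>
      intro hj
      have hj' : (j : ℝ) + 1 ≤ N := by exact_mod_cast hj
      have hd : 3 * ((j + 1 : ℕ) : ℝ) / N - 3 * (j : ℝ) / N = 3 / N := by
        push_cast; ring
      have h3N : 0 < 3 / (N : ℝ) := by positivity
      have top : 3 * ((j + 1 : ℕ) : ℝ) / N ≤ 3 := by
        rw [div_le_iff₀ N0]; push_cast; linarith
      have bot : 0 ≤ 3 * (j : ℝ) / N := by positivity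
      refine (ih (by omega)).enlarge (ε := ε) bot (by linarith) top ?_ (hε _ ⟨bot, by linarith⟩)
      rw [hd, div_mul_eq_mul_div, div_le_iff₀ N0]
      linarith
  have := step N le_rfl
  rwa [mul_div_assoc, div_self N0.ne', mul_one] at this

/-- The sharp lower bound on the triangle density for edge density at most `2/3`, in implicit form:
`1 - c + e c²/2 - t c³/6 ≤ 0` for some `c` in `[0,3]`. Otherwise the polynomial would be positive
at `3` with nonpositive derivative there, which forces `e > 2/3`. -/
lemma exists_cliquePoly_nonpos (he : I3 (fun x y _ => G.W x y) ≤ 2 / 3) :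
    ∃ c ∈ Set.Icc (0 : ℝ) 3, G.cliquePoly (fun _ => c) ≤ 0 := by
  by_contra! hcon
  have hbox := boxNonneg_three hcon
  have hlink := hbox.linkForm_nonneg (m := fun _ => 3) (h := fun _ => 1) measurable_const
    (fun _ => by norm_num) (Good1.const 1) (fun _ => zero_le_one)
  have htop := hcon 3 (by norm_num)
  have e1 : G.edge (fun _ => 1) (fun _ => 3) = 3 * I3 (fun x y _ => G.W x y) := by
    rw [edge, ← I3_cmul]
    congr 1; ext x y z; ring
  have e2 : G.tri (fun _ => 1) (fun _ => 3) (fun _ => 3) = 9 * d3 G := by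
    change _ = 9 * I3 (fun x y z => G.W x y * G.W y z * G.W x z)
    rw [tri, ← I3_cmul]
    congr 1; ext x y z; ring
  rw [cliquePoly_const] at htop
  rw [linkForm, e1, e2, mass, I3_const] at hlink
  linarith

end Graphon

/-! ### Densities of a graphon and of its complement -/

namespace Graphon

variable (G : Graphon)

/-- The edge density, averaged over triples. -/
noncomputable def edgeDensity : ℝ := I3 (fun x y _ => G.W x y)

/-- The density of labelled, not necessarily induced, cherries: the second moment of the degree. -/
noncomputable def cherryDensity : ℝ := I3 (fun x y z => G.W x y * G.W x z)

lemma good_cherry : Good (fun x y z => G.W x y * G.W x z) := G.good12.mul G.good13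

lemma I3_13 : I3 (fun x _ z => G.W x z) = G.edgeDensity := I3_swap23 G.good12

lemma I3_23 : I3 (fun _ y z => G.W y z) = G.edgeDensity := by
  rw [← I3_13]
  exact I3_swap12 G.good13

lemma I3_cherry_snd : I3 (fun x y z => G.W x y * G.W y z) = G.cherryDensity := by
  rw [cherryDensity, ← I3_swap12 G.good_cherry]
  congr 1; ext x y z; rw [G.symm y x]

lemma I3_cherry_thd : I3 (fun x y z => G.W y z * G.W x z) = G.cherryDensity := by
  rw [← I3_cherry_snd, ← I3_swap23 (G.good12.mul G.good23)]
  congr 1; ext x y z; rw [G.symm z y]; ring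

lemma d3_eq : d3 G = I3 (fun x y z => G.W x y * G.W y z * G.W x z) := rfl

lemma d3_le_cherry : d3 G ≤ G.cherryDensity :=
  I3_mono G.goodTri G.good_cherry fun x y z => by
    have := mul_nonneg (G.nonneg x y) (G.nonneg x z)
    nlinarith [G.le_one y z]

lemma d1_eq : d1 G = 3 * (G.edgeDensity - 2 * G.cherryDensity + d3 G) := by
  have e : (fun x y z => G.W x y * (1 - G.W y z) * (1 - G.W x z))
      = fun x y z => G.W x y - G.W x y * G.W y z - G.W x y * G.W x z
        + G.W x y * G.W y z * G.W x z := by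
    ext x y z; ring
  have g := G.good12.mul G.good23
  have : d1 G = 3 * I3 (fun x y z => G.W x y * (1 - G.W y z) * (1 - G.W x z)) := rfl
  rw [this, e, I3_add ((G.good12.sub g).sub G.good_cherry) G.goodTri,
    I3_sub (G.good12.sub g) G.good_cherry, I3_sub G.good12 g, I3_cherry_snd, ← d3_eq,
    ← edgeDensity, ← cherryDensity]
  ring

lemma compl_edgeDensity : I3 (fun x y _ => G.compl.W x y) = 1 - G.edgeDensity := by
  rw [edgeDensity, ← I3_const 1]
  exact I3_sub (Good.const 1) G.good12

lemma compl_d3 : d3 G.compl = 1 - 3 * G.edgeDensity + 3 * G.cherryDensity - d3 G := by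
  have e : (fun x y z => G.compl.W x y * G.compl.W y z * G.compl.W x z)
      = fun x y z => 1 - G.W x y - G.W y z - G.W x z + G.W x y * G.W y z + G.W x y * G.W x z
        + G.W y z * G.W x z - G.W x y * G.W y z * G.W x z := by
    ext x y z; simp only [compl]; ring
  have g0 := Good.const 1
  have g1 := g0.sub G.good12
  have g2 := g1.sub G.good23
  have g3 := g2.sub G.good13
  have k1 := G.good12.mul G.good23
  have k2 := G.good23.mul G.good13
  have g4 := g3.add k1
  have g5 := g4.add G.good_cherry
  have g6 := g5.add k2
  rw [d3_eq, e, I3_sub g6 G.goodTri, I3_add g5 k2, I3_add g4 G.good_cherry, I3_add g3 k1,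
    I3_sub g2 G.good13, I3_sub g1 G.good23, I3_sub g0 G.good12, I3_const, I3_13, I3_23,
    I3_cherry_snd, I3_cherry_thd, ← d3_eq, ← edgeDensity, ← cherryDensity]
  ring

end Graphon

/-! ### The bound -/

/-- Optimisation of the triangle bound: `e` and `t` are the edge and triangle densities, `c` is
a point where the truncated clique polynomial is nonpositive, and `4σ - 6σ²`, `6σ²(1 - 2σ)` are
the densities of the complete tripartite graphon with parts `σ, σ, 1 - 2σ`. -/
lemma edge_sub_tri_le {σ e t c : ℝ} (h1 : 1 / 3 ≤ σ)
    (he : e ≤ 4 * σ - 6 * σ ^ 2) (ht : 0 ≤ t) (hc : c ∈ Set.Icc (0 : ℝ) 3)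
    (hF : 1 - c + c ^ 2 * e / 2 - c ^ 3 * t / 6 ≤ 0) :
    3 * e - 2 * t ≤ 12 * σ - 30 * σ ^ 2 + 24 * σ ^ 3 := by
  have hM : 3 / 2 ≤ 12 * σ - 30 * σ ^ 2 + 24 * σ ^ 3 := by
    have : 12 * σ - 30 * σ ^ 2 + 24 * σ ^ 3 - 3 / 2 = 24 * ((σ - 1 / 2) ^ 2 * (σ - 1 / 4)) := by
      ring
    have : 0 ≤ (σ - 1 / 2) ^ 2 * (σ - 1 / 4) := mul_nonneg (sq_nonneg _) (by linarith)
    linarith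
  rcases le_or_gt e (1 / 2) with hle | hgt
  · linarith
  have c0 : 0 < c := by
    rcases hc.1.eq_or_lt with h | h
    · rw [← h] at hF; norm_num at hF
    · exact h
  -- with `s = 1 / c` the hypothesis reads `6 s³ - 6 s² + 3 e s ≤ t`
  obtain ⟨s, hs⟩ : ∃ s, s = 1 / c := ⟨_, rfl⟩
  have hsc : s * c = 1 := by rw [hs]; field_simp
  have s3 : 1 / 3 ≤ s := by
    rw [hs, div_le_div_iff₀ (by norm_num) c0]; linarith [hc.2]
  have hT : 6 * s ^ 3 - 6 * s ^ 2 + 3 * e * s ≤ t := by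
    have h := mul_nonpos_of_nonneg_of_nonpos (a := 6 * s ^ 3) (by positivity) hF
    have q : 6 * s ^ 3 * (1 - c + c ^ 2 * e / 2 - c ^ 3 * t / 6)
        = 6 * s ^ 3 - 6 * s ^ 2 * (s * c) + 3 * e * s * (s * c) ^ 2 - t * (s * c) ^ 3 := by ring
    rw [q, hsc] at h
    linarith
  rcases le_or_gt s (1 / 2) with hs2 | hs2
  · have k1 : 0 ≤ (1 - 2 * s) * (4 * σ - 6 * σ ^ 2 - e) :=
      mul_nonneg (by linarith) (by linarith)
    have k2 : 0 ≤ (s - σ) ^ 2 * (s - (1 - 2 * σ)) := mul_nonneg (sq_nonneg _) (by linarith)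
    nlinarith
  · have k1 : 0 ≤ (2 * s - 1) * (e - 1 / 2) := mul_nonneg (by linarith) (by linarith)
    have k2 : 0 ≤ s * (1 - 2 * s) ^ 2 := mul_nonneg (by linarith) (sq_nonneg _)
    nlinarith

theorem cocherry_bound_convex_regime (σ : ℝ) (hσ : σ ∈ Set.Ico (1 / 3 : ℝ) (1 / 2))
    (G : Graphon) (h3 : d3 G = hB3 σ) :
    d1 G ≤ hB1 σ := by
  have h1 := hσ.1
  have hd1 := G.d1_eq
  unfold hB3 at h3
  unfold hB1
  -- `1 - 4σ + 6σ²` is the edge density of the extremal configuration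
  rcases le_total G.edgeDensity (1 - 4 * σ + 6 * σ ^ 2) with hp | hp
  · have := G.d3_le_cherry
    linarith
  · have he : I3 (fun x y _ => G.compl.W x y) ≤ 4 * σ - 6 * σ ^ 2 := by
      rw [G.compl_edgeDensity]; linarith
    obtain ⟨c, hc, hF⟩ := Graphon.exists_cliquePoly_nonpos (G := G.compl)
      (he.trans (by nlinarith [sq_nonneg (σ - 1 / 3)]))
    rw [Graphon.cliquePoly_const] at hF
    have ht : 0 ≤ d3 G.compl := I3_nonneg fun x y z =>
      mul_nonneg (mul_nonneg (G.compl.nonneg _ _) (G.compl.nonneg _ _)) (G.compl.nonneg _ _)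
    have := edge_sub_tri_le h1 he ht hc hF
    rw [G.compl_edgeDensity, G.compl_d3] at this
    linarith
end

section
/- Let α ∈ (2, 1+√2). For all real numbers x₁, x₂, x₃ ≥ 0 with x₁ + x₂ + x₃ = 1 and all y₁, y₂, y₃ ∈ [1/2, 1], the value F(x₁,x₂,x₃,y₁,y₂,y₃) is at most (−α⁶ + 6α⁵ − 9α⁴ − 4α³ + 96α − 80)/(144(α − 1)). -/
/-!
Write `β = α - 1 ∈ (1, √2)` and `r = 1 / (β + 2)`. Each summand of `F` is a concave quadratic in
`y`, so maximising over `y ∈ [1/2, 1]` leaves a piecewise cubic in `x` (`envelope`): it is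
`lowCubic` (`y = 1`) on `[0, r]`, `midCubic` (`y` interior) on `[r, 1/2]` and `highCubic`
(`y = 1/2`) on `[1/2, 1]`. Both `lowCubic` and `highCubic` are bounded by `midCubic`, and
`2 * lowCubic (s / 2) = highCubic s`.

The bound is the maximum over `t ∈ [0, 1/2]` of the cubic `highCubic (1 - t) + midCubic t`, whose
defect is `(3 / β) (t - (β² + 1) / 6)² (2 / 3 - β² / 12 - t)` (`high_add_mid_le`). Every
configuration `x₁ ≥ x₂ ≥ x₃` is reduced to this one-parameter family:

* if `x₁ ≥ 1/2`, the two smaller coordinates are merged, with value at most `midCubic (x₂ + x₃)`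
  (`envelope_add_le_mid`);
* if `1/2 ≤ x₂ + x₃ ≤ 2 r`, they contribute at most `highCubic (x₂ + x₃)`
  (`envelope_add_le_high`);
* otherwise `x₁, x₂ > r`, and, `midCubic` being convex there, spreading two coordinates apart
  (`mid_spread`) leads back to the previous case.
-/

open MeasureTheory Real

/-- A summand of `F` at `y = 1`, with `α = β + 1`. -/
noncomputable def lowCubic (β x : ℝ) : ℝ := 3 * x ^ 2 - (β + 4) * x ^ 3

/-- The maximum over all real `y` of a summand of `F`, for `x ≥ 0` and `α = β + 1 > 1`. -/
noncomputable def midCubic (β x : ℝ) : ℝ :=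
  (2 - β) * x ^ 3 + 3 * x * (1 - (2 - β) * x) ^ 2 / (4 * β)

/-- A summand of `F` at `y = 1/2`, with `α = β + 1`. -/
noncomputable def highCubic (β x : ℝ) : ℝ := 3 / 2 * x ^ 2 - (β + 4) / 4 * x ^ 3

/-- The maximum over `y ∈ [1/2, 1]` of a summand of `F`, for `x ≥ 0` and `α = β + 1 > 1`. -/
noncomputable def envelope (β x : ℝ) : ℝ :=
  if x ≤ 1 / (β + 2) then lowCubic β x else if x ≤ 1 / 2 then midCubic β x else highCubic β x

lemma low_le_mid {β x : ℝ} (hβ : 0 < β) (hx : 0 ≤ x) : lowCubic β x ≤ midCubic β x := by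
  have h : midCubic β x - lowCubic β x = 3 * x * (1 - (2 + β) * x) ^ 2 / (4 * β) := by
    unfold midCubic lowCubic; field_simp; ring
  have : 0 ≤ 3 * x * (1 - (2 + β) * x) ^ 2 / (4 * β) := by positivity
  linarith

lemma high_le_mid {β x : ℝ} (hβ : 0 < β) (hx : 0 ≤ x) : highCubic β x ≤ midCubic β x := by
  have h : midCubic β x - highCubic β x = 3 * x * (1 - 2 * x) ^ 2 / (4 * β) := by
    unfold midCubic highCubic; field_simp; ring
  have : 0 ≤ 3 * x * (1 - 2 * x) ^ 2 / (4 * β) := by positivity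
  linarith

lemma mid_r {β : ℝ} (hβ : 0 < β) : midCubic β (1 / (β + 2)) = lowCubic β (1 / (β + 2)) := by
  unfold midCubic lowCubic; field_simp; ring

lemma mid_half {β : ℝ} (hβ : 0 < β) : midCubic β (1 / 2) = highCubic β (1 / 2) := by
  unfold midCubic highCubic; field_simp; ring

lemma r_lt_half {β : ℝ} (hβ : 1 < β) : 1 / (β + 2) < 1 / 2 := by
  rw [div_lt_div_iff₀ (by linarith) (by norm_num)]; linarith

lemma envelope_le_mid {β x : ℝ} (hβ : 0 < β) (hx : 0 ≤ x) : envelope β x ≤ midCubic β x := by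
  unfold envelope
  split_ifs
  · exact low_le_mid hβ hx
  · exact le_rfl
  · exact high_le_mid hβ hx

lemma summand_le_envelope {β x y : ℝ} (hβ : 1 < β) (hx : 0 ≤ x) (hy : y ∈ Set.Icc (1 / 2 : ℝ) 1) :
    x ^ 3 * (3 - (β + 1) - 3 * (3 - (β + 1)) * y - 3 * ((β + 1) - 1) * y ^ 2) + 3 * x ^ 2 * y
      ≤ envelope β x := by
  obtain ⟨hy1, hy2⟩ := hy
  have hβ0 : 0 < β := by linarith
  unfold envelope
  split_ifs with h1 h2
  · rw [le_div_iff₀ (by linarith)] at h1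
    have h3 : 0 ≤ 1 - (2 - β) * x - β * x * (1 + y) := by
      nlinarith [mul_nonneg (mul_nonneg hβ0.le hx) (sub_nonneg.2 hy2)]
    have : 0 ≤ 3 * (x ^ 2 * (1 - y) * (1 - (2 - β) * x - β * x * (1 + y))) :=
      mul_nonneg (by norm_num) (mul_nonneg (mul_nonneg (by positivity) (by linarith)) h3)
    unfold lowCubic
    linarith
  · -- completing the square in `y`
    have h : midCubic β x - (x ^ 3 * (3 - (β + 1) - 3 * (3 - (β + 1)) * y
        - 3 * ((β + 1) - 1) * y ^ 2) + 3 * x ^ 2 * y)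
        = 3 * x * (1 - (2 - β) * x - 2 * β * x * y) ^ 2 / (4 * β) := by
      unfold midCubic; field_simp; ring
    have : 0 ≤ 3 * x * (1 - (2 - β) * x - 2 * β * x * y) ^ 2 / (4 * β) := by positivity
    linarith
  · push Not at h2
    have h3 : 0 ≤ (2 - β) * x + β * x * (y + 1 / 2) - 1 := by
      nlinarith [mul_nonneg (mul_nonneg hβ0.le hx) (sub_nonneg.2 hy1)]
    have : 0 ≤ 3 * (x ^ 2 * (y - 1 / 2) * ((2 - β) * x + β * x * (y + 1 / 2) - 1)) :=
      mul_nonneg (by norm_num) (mul_nonneg (mul_nonneg (by positivity) (by linarith)) h3)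
    unfold highCubic
    linarith

/-- The one-parameter family attaining the bound; the maximiser is `t = (β² + 1) / 6`. -/
lemma high_add_mid_le {β t : ℝ} (hβ : 1 < β) (hβ2 : β ^ 2 < 2) (ht : t ≤ 1 / 2) :
    highCubic β (1 - t) + midCubic β t ≤
      (-(β + 1) ^ 6 + 6 * (β + 1) ^ 5 - 9 * (β + 1) ^ 4 - 4 * (β + 1) ^ 3 + 96 * (β + 1) - 80) /
        (144 * ((β + 1) - 1)) := by
  have hβ0 : 0 < β := by linarith
  have h : (-(β + 1) ^ 6 + 6 * (β + 1) ^ 5 - 9 * (β + 1) ^ 4 - 4 * (β + 1) ^ 3 + 96 * (β + 1) - 80) /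
        (144 * ((β + 1) - 1)) - (highCubic β (1 - t) + midCubic β t)
      = 3 / β * ((t - (β ^ 2 + 1) / 6) ^ 2 * (2 / 3 - β ^ 2 / 12 - t)) := by
    unfold highCubic midCubic
    rw [add_sub_cancel_right]
    field_simp
    ring
  have : 0 ≤ 3 / β * ((t - (β ^ 2 + 1) / 6) ^ 2 * (2 / 3 - β ^ 2 / 12 - t)) :=
    mul_nonneg (by positivity) (mul_nonneg (by positivity) (by linarith))
  linarith

/-- For a fixed sum at least `2 / (β + 2)`, the value of `midCubic u + midCubic v` grows as the
product `u * v` decreases. -/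
lemma mid_spread {β u v u' v' : ℝ} (hβ : 1 < β) (hβ2 : β < 2) (hs : u' + v' = u + v)
    (hc : 2 / (β + 2) ≤ u + v) (hp : u' * v' ≤ u * v) :
    midCubic β u + midCubic β v ≤ midCubic β u' + midCubic β v' := by
  have hβ0 : 0 < β := by linarith
  rw [div_le_iff₀ (by linarith)] at hc
  obtain rfl : u' = u + v - v' := by linarith
  have h : midCubic β (u + v - v') + midCubic β v' - (midCubic β u + midCubic β v)
      = 3 * (2 - β) / (4 * β) * ((u * v - (u + v - v') * v') * ((u + v) * (6 + β) - 4)) := by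
    unfold midCubic; field_simp; ring
  have : 0 ≤ 3 * (2 - β) / (4 * β) * ((u * v - (u + v - v') * v') * ((u + v) * (6 + β) - 4)) := by
    refine mul_nonneg (div_nonneg (by linarith) (by linarith))
      (mul_nonneg (by linarith) ?_)
    nlinarith
  linarith

lemma low_add_low_le_high {β u v : ℝ} (ht : 2 ≤ (u + v) * (β + 4)) :
    lowCubic β u + lowCubic β v ≤ highCubic β (u + v) := by
  have h : highCubic β (u + v) - (lowCubic β u + lowCubic β v)
      = 3 / 4 * ((u - v) ^ 2 * ((u + v) * (β + 4) - 2)) := by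
    unfold highCubic lowCubic; ring
  have : 0 ≤ 3 / 4 * ((u - v) ^ 2 * ((u + v) * (β + 4) - 2)) :=
    mul_nonneg (by norm_num) (mul_nonneg (by positivity) (by linarith))
  linarith

lemma low_add_low_le_mid {β u v : ℝ} (hβ : 1 < β) (hu : 0 ≤ u) (hv : 0 ≤ v) :
    lowCubic β u + lowCubic β v ≤ midCubic β (u + v) := by
  rcases le_total 2 ((u + v) * (β + 4)) with ht | ht
  · exact (low_add_low_le_high ht).trans (high_le_mid (by linarith) (by linarith))
  · -- below this threshold `lowCubic` is superadditive
    have h : lowCubic β (u + v) - (lowCubic β u + lowCubic β v)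
        = 3 * (u * v * (2 - (u + v) * (β + 4))) := by
      unfold lowCubic; ring
    have : 0 ≤ 3 * (u * v * (2 - (u + v) * (β + 4))) :=
      mul_nonneg (by norm_num) (mul_nonneg (mul_nonneg hu hv) (by linarith))
    have := low_le_mid (β := β) (x := u + v) (by linarith) (by linarith)
    linarith

lemma mid_add_low_le_mid {β u v : ℝ} (hβ : 1 < β) (hβ2 : β < 2) (hu : 1 / (β + 2) ≤ u)
    (hv : 0 ≤ v) : midCubic β u + lowCubic β v ≤ midCubic β (u + v) := by
  have hr : 0 ≤ 1 / (β + 2) := by apply div_nonneg <;> linarith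
  have h2 : 2 / (β + 2) = 1 / (β + 2) + 1 / (β + 2) := by ring
  have h := mid_spread (β := β) (u := u) (v := 1 / (β + 2) + v) (u' := u + v)
    (v' := 1 / (β + 2)) hβ hβ2 (by ring) (by linarith)
    (by nlinarith [mul_nonneg hv (sub_nonneg.2 hu)])
  have h3 := low_add_low_le_mid hβ hr hv
  rw [mid_r (by linarith)] at h
  linarith

/-- Merging two coordinates whose sum is at most `1/2`. -/
lemma envelope_add_le_mid {β u v : ℝ} (hβ : 1 < β) (hβ2 : β < 2) (hu : 0 ≤ u) (hv : 0 ≤ v)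
    (ht : u + v ≤ 1 / 2) : envelope β u + envelope β v ≤ midCubic β (u + v) := by
  have hr : 1 / 2 < 1 / (β + 2) + 1 / (β + 2) := by
    rw [← add_div, div_lt_div_iff₀ (by norm_num) (by linarith)]; linarith
  unfold envelope
  split_ifs <;> try linarith
  · exact low_add_low_le_mid hβ hu hv
  · rw [add_comm, add_comm u v]
    exact mid_add_low_le_mid hβ hβ2 (by linarith) hu
  · exact mid_add_low_le_mid hβ hβ2 (by linarith) hv

lemma half_add_low_le_high {β v : ℝ} (hβ : 1 < β) (hv : 0 ≤ v)
    (hs : 1 / 2 + v ≤ 2 / (β + 2)) :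
    highCubic β (1 / 2) + lowCubic β v ≤ highCubic β (1 / 2 + v) := by
  rw [le_div_iff₀ (by linarith)] at hs
  have h : highCubic β (1 / 2 + v) - (highCubic β (1 / 2) + lowCubic β v)
      = v * (3 / 2 - 3 * (β + 4) / 16 - v * (3 / 2 + 3 * (β + 4) / 8)
          + 3 / 4 * (β + 4) * v ^ 2) := by
    unfold highCubic lowCubic; ring
  have : 0 ≤ 3 / 2 - 3 * (β + 4) / 16 - v * (3 / 2 + 3 * (β + 4) / 8)
          + 3 / 4 * (β + 4) * v ^ 2 := by
    nlinarith [mul_nonneg hv (sub_nonneg.2 hβ.le), sq_nonneg v,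
      mul_nonneg (sq_nonneg v) (by linarith : 0 ≤ β)]
  have := mul_nonneg hv this
  linarith

/-- For fixed `u + v`, the sum `midCubic u + lowCubic v` is a cubic in `u` with positive leading coefficient and
nonpositive slope at `u = 1 / (β + 2)`, so on `[1 / (β + 2), 1/2]` it is largest at an endpoint. -/
lemma mid_add_low_le_high {β u v : ℝ} (hβ : 1 < β) (hβ2 : β ^ 2 < 2) (hu : 1 / (β + 2) ≤ u)
    (hu2 : u ≤ 1 / 2) (hs : 1 / 2 ≤ u + v) (hs2 : u + v ≤ 2 / (β + 2)) :
    midCubic β u + lowCubic β v ≤ highCubic β (u + v) := by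
  have hβ0 : 0 < β := by linarith
  have hβ3 : β < 2 := by nlinarith
  obtain ⟨s, rfl⟩ : ∃ s, v = s - u := ⟨u + v, by ring⟩
  rw [add_sub_cancel] at hs hs2 ⊢
  have hW : 0 < 1 / 2 - 1 / (β + 2) := by linarith [r_lt_half hβ]
  have h1 := low_add_low_le_high (β := β) (u := 1 / (β + 2)) (v := s - 1 / (β + 2))
    (by rw [add_sub_cancel]; nlinarith)
  rw [add_sub_cancel, ← mid_r hβ0] at h1
  have h2 := half_add_low_le_high (β := β) (v := s - 1 / 2) hβ (by linarith)
    (by rwa [add_sub_cancel])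
  rw [add_sub_cancel, ← mid_half hβ0] at h2
  -- `d` is the slope at the left endpoint, `c` the leading coefficient
  obtain ⟨d, hd⟩ : ∃ d, d = (2 / (β + 2) - s) * (6 - 3 * (β + 4) * s) := ⟨_, rfl⟩
  obtain ⟨c, hc⟩ : ∃ c, c = (2 - β) + 3 * (2 - β) ^ 2 / (4 * β) + (β + 4) := ⟨_, rfl⟩
  have hd0 : d ≤ 0 := by
    rw [hd]; exact mul_nonpos_of_nonneg_of_nonpos (by linarith) (by nlinarith)
  have hc0 : 0 ≤ c := by
    have : 0 ≤ 3 * (2 - β) ^ 2 / (4 * β) := by positivity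
    linarith
  have key : (1 / 2 - 1 / (β + 2)) ^ 2 *
        (highCubic β s - (midCubic β u + lowCubic β (s - u)))
      = ((1 / 2 - 1 / (β + 2)) ^ 2 - (u - 1 / (β + 2)) ^ 2) *
          (highCubic β s - (midCubic β (1 / (β + 2)) + lowCubic β (s - 1 / (β + 2))))
        + (u - 1 / (β + 2)) ^ 2 *
          (highCubic β s - (midCubic β (1 / 2) + lowCubic β (s - 1 / 2)))
        + (u - 1 / (β + 2)) * (1 / 2 - 1 / (β + 2)) * (1 / 2 - u) *
          (c * (u - 1 / (β + 2)) * (1 / 2 - 1 / (β + 2)) - d) := by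
    rw [hc, hd]; unfold highCubic midCubic lowCubic; field_simp; ring
  have hw : 0 ≤ u - 1 / (β + 2) := by linarith
  have e1 : 0 ≤ ((1 / 2 - 1 / (β + 2)) ^ 2 - (u - 1 / (β + 2)) ^ 2) *
      (highCubic β s - (midCubic β (1 / (β + 2)) + lowCubic β (s - 1 / (β + 2)))) := by
    refine mul_nonneg (sub_nonneg.2 (pow_le_pow_left₀ hw (by linarith) 2)) (by linarith)
  have e2 : 0 ≤ (u - 1 / (β + 2)) ^ 2 *
      (highCubic β s - (midCubic β (1 / 2) + lowCubic β (s - 1 / 2))) :=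
    mul_nonneg (by positivity) (by linarith)
  have e3 : 0 ≤ (u - 1 / (β + 2)) * (1 / 2 - 1 / (β + 2)) * (1 / 2 - u) *
      (c * (u - 1 / (β + 2)) * (1 / 2 - 1 / (β + 2)) - d) := by
    refine mul_nonneg (mul_nonneg (mul_nonneg hw hW.le) (by linarith)) ?_
    have := mul_nonneg (mul_nonneg hc0 hw) hW.le
    linarith
  have h3 : 0 ≤ highCubic β s - (midCubic β u + lowCubic β (s - u)) := by
    refine nonneg_of_mul_nonneg_right ?_ (pow_pos hW 2)
    linarith
  linarith

/-- Merging two coordinates whose sum lies in `[1/2, 2 / (β + 2)]`. -/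
lemma envelope_add_le_high {β u v : ℝ} (hβ : 1 < β) (hβ2 : β ^ 2 < 2) (hu : u ≤ 1 / 2)
    (hv : v ≤ 1 / 2) (hs : 1 / 2 ≤ u + v) (hs2 : u + v ≤ 2 / (β + 2)) :
    envelope β u + envelope β v ≤ highCubic β (u + v) := by
  have h2 : 2 / (β + 2) = 1 / (β + 2) + 1 / (β + 2) := by ring
  unfold envelope
  split_ifs <;> try linarith
  · exact low_add_low_le_high (by nlinarith)
  · rw [add_comm, add_comm u v]
    exact mid_add_low_le_high hβ hβ2 (by linarith) hv (by linarith) (by linarith)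
  · exact mid_add_low_le_high hβ hβ2 (by linarith) hu hs hs2

lemma envelope_sum_le_of_ordered {β x1 x2 x3 : ℝ} (hβ : 1 < β) (hβ2 : β ^ 2 < 2)
    (h3 : 0 ≤ x3) (h32 : x3 ≤ x2) (h21 : x2 ≤ x1) (hsum : x1 + x2 + x3 = 1) :
    envelope β x1 + envelope β x2 + envelope β x3 ≤
      (-(β + 1) ^ 6 + 6 * (β + 1) ^ 5 - 9 * (β + 1) ^ 4 - 4 * (β + 1) ^ 3 + 96 * (β + 1) - 80) /
        (144 * ((β + 1) - 1)) := by
  have hβ0 : 0 < β := by linarith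
  have hβ3 : β < 2 := by nlinarith
  have hr2 : 2 / (β + 2) = 1 / (β + 2) + 1 / (β + 2) := by ring
  have hrh := r_lt_half hβ
  have hr : 1 / 2 < 1 / (β + 2) + 1 / (β + 2) := by
    rw [← add_div, div_lt_div_iff₀ (by norm_num) (by linarith)]; linarith
  have er : envelope β (1 / (β + 2)) = midCubic β (1 / (β + 2)) := by
    rw [mid_r hβ0]; unfold envelope; rw [if_pos le_rfl]
  rcases lt_or_ge (1 / 2) x1 with hx1 | hx1
  · have e1 : envelope β x1 = highCubic β x1 := by
      unfold envelope; rw [if_neg (by linarith), if_neg (by linarith)]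
    have hA := envelope_add_le_mid hβ hβ3 (h3.trans h32) h3 (by linarith)
    have hG := high_add_mid_le (t := x2 + x3) hβ hβ2 (by linarith)
    rw [show 1 - (x2 + x3) = x1 by linarith] at hG
    linarith
  rcases le_total (x2 + x3) (2 / (β + 2)) with hs | hs
  · have hB := envelope_add_le_high hβ hβ2 (by linarith) (by linarith) (by linarith) hs
    have hG := high_add_mid_le (t := x1) hβ hβ2 hx1
    have := envelope_le_mid (x := x1) hβ0 (by linarith)
    rw [show 1 - x1 = x2 + x3 by linarith] at hG
    linarith
  have m1 := envelope_le_mid (x := x1) hβ0 (by linarith)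
  have m2 := envelope_le_mid (x := x2) hβ0 (by linarith)
  have m3 := envelope_le_mid (x := x3) hβ0 h3
  have hx2 : 1 / (β + 2) ≤ x2 := by linarith
  -- lowering `x₂` to `1 / (β + 2)`
  have S1 := mid_spread (u := x1) (v := x2) (u' := x1 + x2 - 1 / (β + 2)) (v' := 1 / (β + 2))
    hβ hβ3 (by ring) (by linarith)
    (by nlinarith [mul_nonneg (sub_nonneg.2 hx2) (sub_nonneg.2 (hx2.trans h21))])
  rcases le_total x3 (1 / (β + 2)) with hx3 | hx3
  · rcases le_total (1 / 2) (x3 + 1 / (β + 2)) with hx3' | hx3'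
    · have hB := envelope_add_le_high (u := 1 / (β + 2)) (v := x3) hβ hβ2 (by linarith)
        (by linarith) (by linarith) (by linarith)
      have hG := high_add_mid_le (t := x1 + x2 - 1 / (β + 2)) hβ hβ2 (by linarith)
      rw [show 1 - (x1 + x2 - 1 / (β + 2)) = 1 / (β + 2) + x3 by linarith] at hG
      linarith
    · -- here `x₁` reaches `1/2` before `x₂` comes down to `1 / (β + 2)`
      have S2 := mid_spread (u := x1) (v := x2) (u' := 1 / 2) (v' := x1 + x2 - 1 / 2)
        hβ hβ3 (by ring) (by linarith)
        (by nlinarith [mul_nonneg (sub_nonneg.2 hx1) (sub_nonneg.2 (h21.trans hx1))])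
      have e2 : envelope β (x1 + x2 - 1 / 2) = midCubic β (x1 + x2 - 1 / 2) := by
        rcases eq_or_lt_of_le (show 1 / (β + 2) ≤ x1 + x2 - 1 / 2 by linarith) with h | h
        · rw [← h, er]
        · unfold envelope; rw [if_neg (by linarith), if_pos (by linarith)]
      have hB := envelope_add_le_high (u := x1 + x2 - 1 / 2) (v := x3) hβ hβ2 (by linarith)
        (by linarith) (by linarith) (by linarith)
      have hG := high_add_mid_le (t := 1 / 2) hβ hβ2 le_rfl
      rw [show x1 + x2 - 1 / 2 + x3 = 1 - 1 / 2 by linarith] at hB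
      linarith
  · -- all three exceed `1 / (β + 2)`: the third is lowered as well
    have hx12 : 1 / (β + 2) ≤ x1 + x2 - 1 / (β + 2) := by linarith
    have S2 := mid_spread (u := x1 + x2 - 1 / (β + 2)) (v := x3)
      (u' := x1 + x2 - 1 / (β + 2) + x3 - 1 / (β + 2)) (v' := 1 / (β + 2))
      hβ hβ3 (by ring) (by linarith)
      (by nlinarith [mul_nonneg (sub_nonneg.2 hx3) (sub_nonneg.2 hx12)])
    have hB := envelope_add_le_high (u := 1 / (β + 2)) (v := 1 / (β + 2)) hβ hβ2 (by linarith)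
        (by linarith) (by linarith) (by linarith)
    have hG := high_add_mid_le (t := x1 + x2 - 1 / (β + 2) + x3 - 1 / (β + 2)) hβ hβ2
      (by linarith)
    rw [show 1 - (x1 + x2 - 1 / (β + 2) + x3 - 1 / (β + 2)) = 1 / (β + 2) + 1 / (β + 2) by
      linarith] at hG
    linarith

theorem max_of_F (α : ℝ) (hα : α ∈ Set.Ioo (2 : ℝ) (1 + Real.sqrt 2))
    (x1 x2 x3 y1 y2 y3 : ℝ)
    (hx1 : 0 ≤ x1) (hx2 : 0 ≤ x2) (hx3 : 0 ≤ x3) (hsum : x1 + x2 + x3 = 1)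
    (hy1 : y1 ∈ Set.Icc (1 / 2 : ℝ) 1) (hy2 : y2 ∈ Set.Icc (1 / 2 : ℝ) 1)
    (hy3 : y3 ∈ Set.Icc (1 / 2 : ℝ) 1) :
    F α x1 x2 x3 y1 y2 y3 ≤
      (-α ^ 6 + 6 * α ^ 5 - 9 * α ^ 4 - 4 * α ^ 3 + 96 * α - 80) / (144 * (α - 1)) := by
  obtain ⟨hα1, hα2⟩ := hα
  obtain ⟨β, rfl⟩ : ∃ β, α = β + 1 := ⟨α - 1, by ring⟩
  have hβ : 1 < β := by linarith
  have hβ2 : β ^ 2 < 2 := by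
    rw [← Real.lt_sqrt (by linarith)]; linarith
  have t1 := summand_le_envelope hβ hx1 hy1
  have t2 := summand_le_envelope hβ hx2 hy2
  have t3 := summand_le_envelope hβ hx3 hy3
  refine (show F (β + 1) x1 x2 x3 y1 y2 y3 ≤ envelope β x1 + envelope β x2 + envelope β x3 by
    unfold F; linarith).trans ?_
  rcases le_total x1 x2 with a | a <;> rcases le_total x2 x3 with b | b <;>
    rcases le_total x1 x3 with c | c
  · linarith [envelope_sum_le_of_ordered hβ hβ2 hx1 a b (by linarith)]
  · linarith [envelope_sum_le_of_ordered hβ hβ2 hx1 a b (by linarith)]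
  · linarith [envelope_sum_le_of_ordered hβ hβ2 hx1 c b (by linarith)]
  · linarith [envelope_sum_le_of_ordered hβ hβ2 hx3 c a (by linarith)]
  · linarith [envelope_sum_le_of_ordered hβ hβ2 hx2 a c (by linarith)]
  · linarith [envelope_sum_le_of_ordered hβ hβ2 hx2 b c (by linarith)]
  · linarith [envelope_sum_le_of_ordered hβ hβ2 hx3 b a (by linarith)]
  · linarith [envelope_sum_le_of_ordered hβ hβ2 hx3 b a (by linarith)]
end

section
/- Let α ∈ (2, 1+√2) and set σ = (−α² + 2α + 4)/12, so σ ∈ (1/4,1/3). Then the point x₁ = x₂ = σ, x₃ = 1 − 2σ, y₁ = y₂ = 1, y₃ = ((1−2σ)·√(5−12σ) + 4σ − 1)/(2(1−2σ)·√(5−12σ)) satisfies x₁, x₂, x₃ ≥ 0, x₁ + x₂ + x₃ = 1, y₁, y₂, y₃ ∈ (1/2, 1], and F(x₁,x₂,x₃,y₁,y₂,y₃) = (−α⁶ + 6α⁵ − 9α⁴ − 4α³ + 96α − 80)/(144(α − 1)). -/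
/-!
The choice of `σ` makes `5 - 12σ = (α - 1)²`, so the square root is just `α - 1`. The range of `α`
gives `1 < (α - 1)² < 2`, which is exactly `1/4 < σ < 1/3`; the bounds on `y₃` follow, and the
value of `F` becomes an identity of rational functions in `α`.
-/

open MeasureTheory Real

theorem max_of_F_attained (α : ℝ) (hα : α ∈ Set.Ioo (2 : ℝ) (1 + Real.sqrt 2))
    (σ : ℝ) (hσ : σ = (-α ^ 2 + 2 * α + 4) / 12) :
    σ ∈ Set.Ioo (1 / 4 : ℝ) (1 / 3) ∧
    (0 ≤ σ ∧ 0 ≤ 1 - 2 * σ ∧ σ + σ + (1 - 2 * σ) = 1) ∧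
    ((1 : ℝ) ∈ Set.Ioc (1 / 2 : ℝ) 1 ∧
      ((1 - 2 * σ) * Real.sqrt (5 - 12 * σ) + 4 * σ - 1) /
          (2 * (1 - 2 * σ) * Real.sqrt (5 - 12 * σ)) ∈ Set.Ioc (1 / 2 : ℝ) 1) ∧
    F α σ σ (1 - 2 * σ) 1 1
        (((1 - 2 * σ) * Real.sqrt (5 - 12 * σ) + 4 * σ - 1) /
          (2 * (1 - 2 * σ) * Real.sqrt (5 - 12 * σ))) =
      (-α ^ 6 + 6 * α ^ 5 - 9 * α ^ 4 - 4 * α ^ 3 + 96 * α - 80) / (144 * (α - 1)) := by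
  obtain ⟨h2, h3⟩ := hα
  have hs : Real.sqrt (5 - 12 * σ) = α - 1 := by
    rw [show 5 - 12 * σ = (α - 1) ^ 2 by rw [hσ]; ring]
    exact Real.sqrt_sq (by linarith)
  have hsq : (α - 1) ^ 2 < 2 := by
    have h := Real.sq_sqrt (show (0 : ℝ) ≤ 2 by norm_num)
    nlinarith
  have hσ1 : 1 / 4 < σ := by rw [hσ]; nlinarith
  have hσ2 : σ < 1 / 3 := by rw [hσ]; nlinarith
  have hp : 0 < 1 - 2 * σ := by linarith
  have ha : 0 < α - 1 := by linarith
  have hd : 0 < 2 * (1 - 2 * σ) * (α - 1) := by positivity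
  rw [hs]
  refine ⟨⟨hσ1, hσ2⟩, ⟨by linarith, hp.le, by ring⟩, ⟨by norm_num, ?_, ?_⟩, ?_⟩
  · rw [lt_div_iff₀ hd]
    nlinarith
  · -- Equivalent to `4σ - 1 ≤ (1 - 2σ)(α - 1)`, where `4σ - 1 < 1 / 3 < 1 - 2σ` and `1 < α - 1`.
    rw [div_le_one hd]
    nlinarith
  · -- With `y₃ = 1 / 2 + (4σ - 1) / (2 (1 - 2σ) (α - 1))`, substituting `σ` leaves a rational
    -- identity in `α`.
    -- Here `α² - 2α + 2 = 6 (1 - 2σ)` and `2 - (α - 1)² = 3 (4σ - 1)`.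
    have hq : α ^ 2 - 2 * α + 2 ≠ 0 := by nlinarith
    have ha' : α - 1 ≠ 0 := ha.ne'
    have hy : ((1 - 2 * σ) * (α - 1) + 4 * σ - 1) / (2 * (1 - 2 * σ) * (α - 1)) =
        ((α ^ 2 - 2 * α + 2) * (α - 1) + 2 * (2 - (α - 1) ^ 2)) /
          (2 * (α ^ 2 - 2 * α + 2) * (α - 1)) := by
      rw [div_eq_div_iff hd.ne' (by positivity), hσ]
      ring
    rw [hy, hσ]
    unfold F
    field_simp
    ring
end

section
/- The set of pairs (d₁(W), d₂(W)) over all graphons W is exactly the set of pairs (a, b) ∈ ℝ² with a ≥ 0, b ≥ 0 and a + b ≤ 3/4. In particular, every graphon W satisfies d₁(W) + d₂(W) ≤ 3/4, and for every pair (a,b) with a ≥ 0, b ≥ 0 and a + b ≤ 3/4 there exists a graphon W with d₁(W) = a and d₂(W) = b. -/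
/-!
Write `deg` for the degree function of a graphon.  A triple of vertices that is neither a triangle
nor a co-triangle has exactly two vertices at which an edge meets a non-edge, so
`d₁ + d₂ = 3 ∫ deg (1 - deg) ≤ 3/4` (`d1_add_d2_eq`, `d1_add_d2_le`).  The identity comes from
splitting `W(x,y)(1 - W(x,z))` according to whether `yz` is an edge.

Conversely, let `a + b = 3c(1-c)` with `0 ≤ c ≤ 1/2`.  For `0 ≤ t ≤ c` take the two-block graphon
with parts of sizes `t` and `1 - t`, density `1` inside the first part, and the two remaining
densities chosen so that the parts have degrees `c` and `1 - c`.  Since `deg (1 - deg) = c(1-c)`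
throughout, `d₁ + d₂ = 3c(1-c)` for every `t`.  At `t = c` the graphon is a disjoint union of two
cliques, where `d₂ = 0`; at `t = 0` it is the constant `1 - c`, where `d₁ ≤ d₂`.  By the intermediate
value theorem every pair with `b ≤ a` is attained (`exists_block`), and passing to the complement,
which exchanges `d₁` and `d₂`, gives the pairs with `a ≤ b`.
-/

open MeasureTheory Real

/-- Lebesgue measure on `[0,1]`. -/
local notation "μ₀" => (volume.restrict (Set.Icc (0 : ℝ) 1))

instance unitInterval_isProbabilityMeasure : IsProbabilityMeasure μ₀ :=
  ⟨by simp⟩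

/-! ### The upper bound -/

lemma triple_integrable {f : ℝ → ℝ → ℝ → ℝ}
    (hf : Measurable fun p : ℝ × ℝ × ℝ => f p.1 p.2.1 p.2.2)
    (hb : ∀ x y z, f x y z ∈ Set.Icc (0 : ℝ) 1) :
    Integrable (fun p : ℝ × ℝ × ℝ => f p.1 p.2.1 p.2.2) (Measure.prod μ₀ (Measure.prod μ₀ μ₀)) := by
  refine Integrable.of_bound hf.aestronglyMeasurable 1 (Filter.Eventually.of_forall fun p => ?_)
  have h := hb p.1 p.2.1 p.2.2
  rw [Real.norm_eq_abs, abs_of_nonneg h.1]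
  exact h.2

lemma triple_integral {f : ℝ → ℝ → ℝ → ℝ}
    (hf : Measurable fun p : ℝ × ℝ × ℝ => f p.1 p.2.1 p.2.2)
    (hb : ∀ x y z, f x y z ∈ Set.Icc (0 : ℝ) 1) :
    ∫ x, ∫ y, ∫ z, f x y z ∂μ₀ ∂μ₀ ∂μ₀ =
      ∫ p : ℝ × ℝ × ℝ, f p.1 p.2.1 p.2.2 ∂(Measure.prod μ₀ (Measure.prod μ₀ μ₀)) := by
  rw [integral_prod _ (triple_integrable hf hb)]
  refine integral_congr_ae (Filter.Eventually.of_forall fun x => ?_)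
  have hm : Measurable fun q : ℝ × ℝ => f x q.1 q.2 :=
    hf.comp (measurable_const.prodMk measurable_id)
  have hi : Integrable (fun q : ℝ × ℝ => f x q.1 q.2) (Measure.prod μ₀ μ₀) := by
    refine Integrable.of_bound hm.aestronglyMeasurable 1 (Filter.Eventually.of_forall fun q => ?_)
    have h := hb x q.1 q.2
    rw [Real.norm_eq_abs, abs_of_nonneg h.1]
    exact h.2
  exact (integral_prod _ hi).symm

lemma triple_swap {f : ℝ → ℝ → ℝ → ℝ}
    (hf : Measurable fun p : ℝ × ℝ × ℝ => f p.1 p.2.1 p.2.2)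
    (hb : ∀ x y z, f x y z ∈ Set.Icc (0 : ℝ) 1) :
    ∫ x, ∫ y, ∫ z, f x y z ∂μ₀ ∂μ₀ ∂μ₀ = ∫ x, ∫ y, ∫ z, f y x z ∂μ₀ ∂μ₀ ∂μ₀ := by
  refine integral_integral_swap (f := fun x y => ∫ z, f x y z ∂μ₀) ?_
  have hm : Measurable fun p : (ℝ × ℝ) × ℝ => f p.1.1 p.1.2 p.2 :=
    hf.comp ((measurable_fst.comp measurable_fst).prodMk
      ((measurable_snd.comp measurable_fst).prodMk measurable_snd))
  refine Integrable.of_bound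
    (hm.stronglyMeasurable.integral_prod_right' (ν := μ₀)).aestronglyMeasurable 1
    (Filter.Eventually.of_forall fun p => ?_)
  refine (norm_integral_le_of_norm_le_const (C := 1)
    (Filter.Eventually.of_forall fun z => ?_)).trans ?_
  · have h := hb p.1 p.2 z
    rw [Real.norm_eq_abs, abs_of_nonneg h.1]
    exact h.2
  · simp

lemma prod3_mem {a b c : ℝ} (ha : a ∈ Set.Icc (0 : ℝ) 1) (hb : b ∈ Set.Icc (0 : ℝ) 1)
    (hc : c ∈ Set.Icc (0 : ℝ) 1) : a * b * c ∈ Set.Icc (0 : ℝ) 1 :=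
  ⟨mul_nonneg (mul_nonneg ha.1 hb.1) hc.1,
    mul_le_one₀ (mul_le_one₀ ha.2 hb.1 hb.2) hc.1 hc.2⟩

lemma one_sub_mem {a : ℝ} (ha : a ∈ Set.Icc (0 : ℝ) 1) : 1 - a ∈ Set.Icc (0 : ℝ) 1 :=
  ⟨by linarith [ha.2], by linarith [ha.1]⟩

lemma d1_nonneg (G : Graphon) : 0 ≤ d1 G := by
  refine mul_nonneg (by norm_num) ?_
  refine integral_nonneg fun x => integral_nonneg fun y => integral_nonneg fun z => ?_
  exact (prod3_mem (G.mem_Icc x y) (one_sub_mem (G.mem_Icc y z)) (one_sub_mem (G.mem_Icc x z))).1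

lemma d2_nonneg (G : Graphon) : 0 ≤ d2 G := by
  refine mul_nonneg (by norm_num) ?_
  refine integral_nonneg fun x => integral_nonneg fun y => integral_nonneg fun z => ?_
  exact (prod3_mem (G.mem_Icc x y) (G.mem_Icc x z) (one_sub_mem (G.mem_Icc y z))).1

lemma d1_add_d2_eq (G : Graphon) : d1 G + d2 G = 3 * ∫ x, deg G x * (1 - deg G x) ∂μ₀ := by
  have hxy : Measurable fun p : ℝ × ℝ × ℝ => G.W p.1 p.2.1 :=
    G.measurable.comp (measurable_fst.prodMk (measurable_fst.comp measurable_snd))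
  have hxz : Measurable fun p : ℝ × ℝ × ℝ => G.W p.1 p.2.2 :=
    G.measurable.comp (measurable_fst.prodMk (measurable_snd.comp measurable_snd))
  have hyz : Measurable fun p : ℝ × ℝ × ℝ => G.W p.2.1 p.2.2 :=
    G.measurable.comp measurable_snd
  have m1 : Measurable fun p : ℝ × ℝ × ℝ =>
      G.W p.1 p.2.1 * (1 - G.W p.2.1 p.2.2) * (1 - G.W p.1 p.2.2) :=
    (hxy.mul (measurable_const.sub hyz)).mul (measurable_const.sub hxz)
  have m2 : Measurable fun p : ℝ × ℝ × ℝ =>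
      G.W p.1 p.2.1 * G.W p.1 p.2.2 * (1 - G.W p.2.1 p.2.2) :=
    (hxy.mul hxz).mul (measurable_const.sub hyz)
  have m3 : Measurable fun p : ℝ × ℝ × ℝ =>
      G.W p.2.1 p.1 * G.W p.2.1 p.2.2 * (1 - G.W p.1 p.2.2) := by
    simp only [fun p : ℝ × ℝ × ℝ => G.symm p.2.1 p.1]
    exact (hxy.mul hyz).mul (measurable_const.sub hxz)
  have b1 : ∀ x y z, G.W x y * (1 - G.W y z) * (1 - G.W x z) ∈ Set.Icc (0 : ℝ) 1 :=
    fun x y z => prod3_mem (G.mem_Icc x y) (one_sub_mem (G.mem_Icc y z))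
      (one_sub_mem (G.mem_Icc x z))
  have b2 : ∀ x y z, G.W x y * G.W x z * (1 - G.W y z) ∈ Set.Icc (0 : ℝ) 1 :=
    fun x y z => prod3_mem (G.mem_Icc x y) (G.mem_Icc x z) (one_sub_mem (G.mem_Icc y z))
  have m4 : Measurable fun p : ℝ × ℝ × ℝ => G.W p.1 p.2.1 * (1 - G.W p.1 p.2.2) :=
    hxy.mul (measurable_const.sub hxz)
  have b4 : ∀ x y z, G.W x y * (1 - G.W x z) ∈ Set.Icc (0 : ℝ) 1 := fun x y z => by
    simpa using prod3_mem (G.mem_Icc x y) (one_sub_mem (G.mem_Icc x z))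
      (show (1 : ℝ) ∈ Set.Icc (0 : ℝ) 1 by simp)
  have key : ∫ x, ∫ y, ∫ z, G.W x y * (1 - G.W x z) ∂μ₀ ∂μ₀ ∂μ₀ =
      ∫ x, deg G x * (1 - deg G x) ∂μ₀ := by
    refine integral_congr_ae (Filter.Eventually.of_forall fun x => ?_)
    have hi : Integrable (fun z => G.W x z) μ₀ := by
      refine Integrable.of_bound (G.measurable.comp
        (measurable_const.prodMk measurable_id)).aestronglyMeasurable 1
        (Filter.Eventually.of_forall fun z => ?_)
      have h := G.mem_Icc x z
      rw [Real.norm_eq_abs, abs_of_nonneg h.1]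
      exact h.2
    simp only [integral_const_mul, integral_mul_const]
    rw [integral_sub (integrable_const _) hi]
    simp [deg]
  -- Exchanging `x` and `y` in `d2` moves the centre of the cherry to `y`; the two integrands then
  -- add up to `W(x,y)(1 - W(x,z))`.
  rw [← key, d1, d2, ← mul_add, triple_swap m2 b2, triple_integral m1 b1,
    triple_integral (f := fun x y z => G.W y x * G.W y z * (1 - G.W x z)) m3
      (fun x y z => b2 y x z),
    ← integral_add (triple_integrable m1 b1)
      (triple_integrable (f := fun x y z => G.W y x * G.W y z * (1 - G.W x z)) m3
      (fun x y z => b2 y x z)),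
    triple_integral (f := fun x y z => G.W x y * (1 - G.W x z)) m4 b4]
  congr 1
  refine integral_congr_ae (Filter.Eventually.of_forall fun p => ?_)
  simp only [G.symm p.2.1 p.1]
  ring

lemma d1_add_d2_le (G : Graphon) : d1 G + d2 G ≤ 3 / 4 := by
  have hdeg : ∀ x, deg G x ∈ Set.Icc (0 : ℝ) 1 := fun x => by
    refine ⟨integral_nonneg fun y => (G.mem_Icc x y).1, ?_⟩
    have := integral_mono_of_nonneg (μ := μ₀)
      (Filter.Eventually.of_forall fun y => (G.mem_Icc x y).1)
      (integrable_const (1 : ℝ)) (Filter.Eventually.of_forall fun y => (G.mem_Icc x y).2)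
    simpa [deg] using this
  have h : ∫ x, deg G x * (1 - deg G x) ∂μ₀ ≤ ∫ _x, (1 / 4 : ℝ) ∂μ₀ := by
    refine integral_mono_of_nonneg (Filter.Eventually.of_forall fun x => ?_)
      (integrable_const _) (Filter.Eventually.of_forall fun x => ?_)
    · exact mul_nonneg (hdeg x).1 (one_sub_mem (hdeg x)).1
    · show deg G x * (1 - deg G x) ≤ 1 / 4
      nlinarith [sq_nonneg (2 * deg G x - 1)]
  rw [d1_add_d2_eq]
  simp only [integral_const, probReal_univ, one_smul] at h
  linarith

/-! ### Two-block graphons -/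

/-- Symmetric `2 × 2` matrix with diagonal `p, r` and off-diagonal entry `q`; the index `true`
stands for the first block. -/
def blockMatrix (p q r : ℝ) : Bool → Bool → ℝ
  | true, true => p
  | true, false => q
  | false, true => q
  | false, false => r

/-- The graphon with blocks `(-∞, t)` and `[t, ∞)`, densities `p` and `r` inside the blocks and `q`
between them. -/
noncomputable def blockGraphon (t p q r : ℝ) (hp : p ∈ Set.Icc (0 : ℝ) 1)
    (hq : q ∈ Set.Icc (0 : ℝ) 1) (hr : r ∈ Set.Icc (0 : ℝ) 1) : Graphon where
  W x y := blockMatrix p q r (decide (x < t)) (decide (y < t))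
  measurable := by
    have hd : Measurable fun x : ℝ => decide (x < t) := by
      refine measurable_to_bool ?_
      have : (fun x : ℝ => decide (x < t)) ⁻¹' {true} = Set.Iio t := by ext; simp
      rw [this]
      exact measurableSet_Iio
    exact (measurable_of_finite (Function.uncurry (blockMatrix p q r))).comp
      ((hd.comp measurable_fst).prodMk (hd.comp measurable_snd))
  mem_Icc x y := by
    cases decide (x < t) <;> cases decide (y < t) <;> simpa [blockMatrix]
  symm x y := by
    cases decide (x < t) <;> cases decide (y < t) <;> rfl

lemma integral_block {t : ℝ} (h0 : 0 ≤ t) (h1 : t ≤ 1) (φ : Bool → ℝ) :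
    ∫ x, φ (decide (x < t)) ∂μ₀ = t * φ true + (1 - t) * φ false := by
  have h : (fun x : ℝ => φ (decide (x < t))) =
      fun x => (Set.Iio t).indicator (fun _ => φ true - φ false) x + φ false := by
    funext x
    by_cases hx : x < t <;> simp [hx]
  rw [h, integral_add ((integrable_const _).indicator measurableSet_Iio) (integrable_const _),
    integral_indicator measurableSet_Iio, Measure.restrict_restrict measurableSet_Iio]
  have hs : Set.Iio t ∩ Set.Icc (0 : ℝ) 1 = Set.Ico 0 t := by
    ext x
    simp only [Set.mem_inter_iff, Set.mem_Iio, Set.mem_Icc, Set.mem_Ico]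
    constructor
    · rintro ⟨a, b, c⟩; exact ⟨b, a⟩
    · rintro ⟨a, b⟩; exact ⟨b, a, by linarith⟩
  rw [hs]
  simp [h0]
  ring

lemma integral_block3 {t : ℝ} (h0 : 0 ≤ t) (h1 : t ≤ 1) (φ : Bool → Bool → Bool → ℝ) :
    ∫ x, ∫ y, ∫ z, φ (decide (x < t)) (decide (y < t)) (decide (z < t)) ∂μ₀ ∂μ₀ ∂μ₀ =
      t * (t * (t * φ true true true + (1 - t) * φ true true false) +
        (1 - t) * (t * φ true false true + (1 - t) * φ true false false)) +
      (1 - t) * (t * (t * φ false true true + (1 - t) * φ false true false) +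
        (1 - t) * (t * φ false false true + (1 - t) * φ false false false)) := by
  simp only [fun a b => integral_block h0 h1 (φ a b)]
  simp only [fun a => integral_block h0 h1
    (fun b => t * φ a b true + (1 - t) * φ a b false)]
  exact integral_block h0 h1 (fun a => t * (t * φ a true true + (1 - t) * φ a true false) +
        (1 - t) * (t * φ a false true + (1 - t) * φ a false false))

/-- The co-cherry density of a two-block graphon, as a polynomial. -/
def blockD1 (t p q r : ℝ) : ℝ :=
  3 * (t ^ 3 * (p * (1 - p) ^ 2) + (1 - t) ^ 3 * (r * (1 - r) ^ 2)
    + t ^ 2 * (1 - t) * (p * (1 - q) ^ 2 + 2 * q * (1 - p) * (1 - q))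
    + t * (1 - t) ^ 2 * (r * (1 - q) ^ 2 + 2 * q * (1 - r) * (1 - q)))

section
variable {t p q r : ℝ} (hp : p ∈ Set.Icc (0 : ℝ) 1)
    (hq : q ∈ Set.Icc (0 : ℝ) 1) (hr : r ∈ Set.Icc (0 : ℝ) 1)

lemma d1_block (h0 : 0 ≤ t) (h1 : t ≤ 1) : d1 (blockGraphon t p q r hp hq hr) = blockD1 t p q r := by
  have := integral_block3 h0 h1 fun a b c => blockMatrix p q r a b *
    (1 - blockMatrix p q r b c) * (1 - blockMatrix p q r a c)
  simp only [d1, blockGraphon, this]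
  simp only [blockMatrix, blockD1]
  ring

/-- The cherry density is the co-cherry density of the complement. -/
lemma d2_block (h0 : 0 ≤ t) (h1 : t ≤ 1) : d2 (blockGraphon t p q r hp hq hr) = blockD1 t (1 - p) (1 - q) (1 - r) := by
  have := integral_block3 h0 h1 fun a b c => blockMatrix p q r a b *
    blockMatrix p q r a c * (1 - blockMatrix p q r b c)
  simp only [d2, blockGraphon, this]
  simp only [blockMatrix, blockD1]
  ring
end

/-- `d₁ + d₂ = 3 ∫ deg (1 - deg)` for two blocks. -/
lemma blockD1_add (t p q r : ℝ) :
    blockD1 t p q r + blockD1 t (1 - p) (1 - q) (1 - r) =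
      3 * (t * ((t * p + (1 - t) * q) * (1 - (t * p + (1 - t) * q)))
        + (1 - t) * ((t * q + (1 - t) * r) * (1 - (t * q + (1 - t) * r)))) := by
  simp only [blockD1]
  ring

/-! ### Attaining every pair -/

/-- Pairs with `b ≤ a` are attained by two-block graphons whose first block is a clique and whose
blocks have degrees `c` and `1 - c`, where `3c(1-c) = a + b`. -/
lemma exists_block {a b : ℝ} (hb : 0 ≤ b) (hba : b ≤ a) (hab : a + b ≤ 3 / 4) :
    ∃ t p q r : ℝ, 0 ≤ t ∧ t ≤ 1 ∧ p ∈ Set.Icc (0 : ℝ) 1 ∧ q ∈ Set.Icc (0 : ℝ) 1 ∧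
      r ∈ Set.Icc (0 : ℝ) 1 ∧ blockD1 t p q r = a ∧ blockD1 t (1 - p) (1 - q) (1 - r) = b := by
  obtain ⟨c, hc0, hc1, hc⟩ : ∃ c : ℝ, 0 ≤ c ∧ c ≤ 1 / 2 ∧ 3 * (c * (1 - c)) = a + b := by
    have hs : 0 ≤ 1 - 4 * (a + b) / 3 := by linarith
    have h1 : Real.sqrt (1 - 4 * (a + b) / 3) ≤ 1 := Real.sqrt_le_one.mpr (by linarith)
    have h2 := Real.sqrt_nonneg (1 - 4 * (a + b) / 3)
    refine ⟨(1 - Real.sqrt (1 - 4 * (a + b) / 3)) / 2, by linarith, by linarith, ?_⟩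
    nlinarith [Real.sq_sqrt hs]
  -- The densities that force degree `c` on the first block and `1 - c` on the second.
  let q : ℝ → ℝ := fun t => (c - t) / (1 - t)
  let r : ℝ → ℝ := fun t => (1 - c - t * q t) / (1 - t)
  have hne : ∀ t ∈ Set.Icc 0 c, 1 - t ≠ 0 := fun t ht => by
    have := ht.2
    intro h
    linarith
  have hqc : ContinuousOn q (Set.Icc 0 c) :=
    ContinuousOn.div (by fun_prop) (by fun_prop) hne
  have hrc : ContinuousOn r (Set.Icc 0 c) :=
    ContinuousOn.div (by fun_prop) (by fun_prop) hne
  have hcont : ContinuousOn (fun t => blockD1 t 1 (q t) (r t)) (Set.Icc 0 c) := by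
    simp only [blockD1]
    fun_prop
  have hcc : 1 - c ≠ 0 := by intro h; linarith
  have e0 : blockD1 0 1 (q 0) (r 0) ≤ a := by
    have : blockD1 0 1 (q 0) (r 0) = c * (3 * (c * (1 - c))) := by
      simp only [blockD1, q, r]
      ring
    rw [this, hc]
    nlinarith
  have e1 : a ≤ blockD1 c 1 (q c) (r c) := by
    have : blockD1 c 1 (q c) (r c) = 3 * (c * (1 - c)) := by
      have hq : q c = 0 := by simp [q]
      have hr : r c = 1 := by simp [r, hq, hcc]
      rw [hq, hr, blockD1]
      ring
    rw [this, hc]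
    linarith
  obtain ⟨t, ht, hta⟩ := intermediate_value_Icc hc0 hcont ⟨e0, e1⟩
  simp only at hta
  have htc := ht.2
  have ht0 := ht.1
  have h1t : 0 < 1 - t := by linarith
  have hq : (1 - t) * q t = c - t := mul_div_cancel₀ _ h1t.ne'
  have hr : (1 - t) * r t = 1 - c - t * q t := mul_div_cancel₀ _ h1t.ne'
  have hqm : q t ∈ Set.Icc (0 : ℝ) 1 :=
    ⟨div_nonneg (by linarith) h1t.le, (div_le_one h1t).mpr (by linarith)⟩
  have hrm : r t ∈ Set.Icc (0 : ℝ) 1 := by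
    refine ⟨div_nonneg ?_ h1t.le, (div_le_one h1t).mpr ?_⟩ <;> nlinarith [hqm.1, hqm.2]
  refine ⟨t, 1, q t, r t, ht0, by linarith, by simp, hqm, hrm, hta, ?_⟩
  have hsum := blockD1_add t 1 (q t) (r t)
  have hA : t * 1 + (1 - t) * q t = c := by linarith
  have hB : t * q t + (1 - t) * r t = 1 - c := by linarith
  rw [hA, hB, hta] at hsum
  linarith

theorem projection_S12 :
    {p : ℝ × ℝ | ∃ G : Graphon, d1 G = p.1 ∧ d2 G = p.2} =
      {p : ℝ × ℝ | 0 ≤ p.1 ∧ 0 ≤ p.2 ∧ p.1 + p.2 ≤ 3 / 4} := by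
  ext ⟨a, b⟩
  simp only [Set.mem_ofPred_eq]
  constructor
  · rintro ⟨G, rfl, rfl⟩
    exact ⟨d1_nonneg G, d2_nonneg G, d1_add_d2_le G⟩
  · rintro ⟨ha, hb, hab⟩
    rcases le_total b a with h | h
    · obtain ⟨t, p, q, r, h0, h1, hp, hq, hr, e1, e2⟩ := exists_block hb h hab
      exact ⟨blockGraphon t p q r hp hq hr, (d1_block hp hq hr h0 h1).trans e1,
        (d2_block hp hq hr h0 h1).trans e2⟩
    · obtain ⟨t, p, q, r, h0, h1, hp, hq, hr, e1, e2⟩ :=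
        exists_block ha h (by linarith : b + a ≤ 3 / 4)
      refine ⟨blockGraphon t (1 - p) (1 - q) (1 - r) (one_sub_mem hp) (one_sub_mem hq)
        (one_sub_mem hr), (d1_block _ _ _ h0 h1).trans e2, (d2_block _ _ _ h0 h1).trans ?_⟩
      simpa only [sub_sub_cancel] using e1
end
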